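/- arXiv:2006.14213 — 3 statements merged into one kernel-verified Lean document; each statement's English description precedes it below -/
import Mathlib

section
/- For every dimension d ≥ 1 and every constant c > 0 there exists a constant C(d,c) > 0 such that for every ε ∈ (0,1), every compact set E ⊂ ℝ^d that is weakly mean porous with parameters α(t) = ε·t and λ(k) = c·ε^{−1} (constant in k) satisfies dim_H(E) ≤ d − C(d,c)·ε^{d−1}. -/
open Metric Set MeasureTheory

noncomputable section

abbrev Plane := EuclideanSpace ℝ (Fin 2)

/-- An open axis-parallel cube in `ℝ^d` with side length `s`. -/
def IsCube {d : ℕ} (Q : Set (EuclideanSpace ℝ (Fin d))) (s : ℝ) : Prop :=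
  0 < s ∧ ∃ c : Fin d → ℝ, Q = {x | ∀ i, x i ∈ Set.Ioo (c i) (c i + s)}

/-- The curve condition with exponent `p` and constant `C`: any two points of the
complement of `Ω` can be joined by a unit-speed (1-Lipschitz) curve in the complement
along which the arclength integral of `dist(·, ∂Ω)^(1-p)` is at most `C‖z₁-z₂‖^(2-p)`. -/
def CurveCondition (Ω : Set Plane) (p C : ℝ) : Prop :=
  ∀ z₁ ∈ Ωᶜ, ∀ z₂ ∈ Ωᶜ, ∃ (L : ℝ) (γ : ℝ → Plane), 0 ≤ L ∧
    LipschitzOnWith 1 γ (Set.Icc 0 L) ∧ γ 0 = z₁ ∧ γ L = z₂ ∧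
    (∀ t ∈ Set.Icc (0:ℝ) L, γ t ∈ Ωᶜ) ∧
    (∫ t in (0:ℝ)..L, Metric.infDist (γ t) (frontier Ω) ^ (1 - p)) ≤ C * ‖z₁ - z₂‖ ^ (2 - p)

/-- `Ω` is a `J`-John domain: there is a center `x₀` such that every point can be joined
to `x₀` by a unit-speed (1-Lipschitz) curve `γ` in `Ω` with `dist(γ t, ∂Ω) ≥ J·t`. -/
def IsJohnDomain (Ω : Set Plane) (J : ℝ) : Prop :=
  ∃ x₀ ∈ Ω, ∀ x ∈ Ω, ∃ (ℓ : ℝ) (γ : ℝ → Plane), 0 ≤ ℓ ∧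
    LipschitzOnWith 1 γ (Set.Icc 0 ℓ) ∧ γ 0 = x ∧ γ ℓ = x₀ ∧
    (∀ t ∈ Set.Icc (0:ℝ) ℓ, γ t ∈ Ω ∧ J * t ≤ Metric.infDist (γ t) (frontier Ω))

/-- `Ω` is a Jordan domain: a bounded domain whose boundary is a homeomorphic
image of the circle. -/
def IsJordanDomain (Ω : Set Plane) : Prop :=
  IsOpen Ω ∧ IsConnected Ω ∧ Bornology.IsBounded Ω ∧
  ∃ f : (Metric.sphere (0 : Plane) 1) → Plane,
    Continuous f ∧ Function.Injective f ∧ Set.range f = frontier Ω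

/-- `E` is weakly mean porous with parameters `(α, lam)`: there is a pairwise disjoint
collection `D` of open cubes in the complement of `E` and a `j₀` such that for every
`x ∈ E` and `j ≥ j₀`, more than half of the scales `k ∈ {1,…,j}` admit at least `lam k`
cubes of `D` of side length at least `α(2^(-k))` inside the annulus
`B(x,2^(-k)) ∖ B(x,2^(-k-1))`. -/
def WeaklyMeanPorous {d : ℕ} (E : Set (EuclideanSpace ℝ (Fin d)))
    (α : ℝ → ℝ) (lam : ℕ → ℝ) : Prop :=
  ∃ (D : Set (Set (EuclideanSpace ℝ (Fin d)))) (j₀ : ℕ), 0 < j₀ ∧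
    (∀ Q ∈ D, (∃ s, IsCube Q s) ∧ Q ⊆ Eᶜ) ∧ D.Pairwise Disjoint ∧
    ∀ x ∈ E, ∀ j : ℕ, j₀ ≤ j →
      (j : ℝ) / 2 < ({k : ℕ | k ∈ Finset.Icc 1 j ∧
        ∃ S : Finset (Set (EuclideanSpace ℝ (Fin d))), lam k ≤ S.card ∧
          ∀ Q ∈ S, Q ∈ D ∧
            Q ⊆ Metric.ball x ((2:ℝ) ^ (-(k:ℝ))) \ Metric.ball x ((2:ℝ) ^ (-(k:ℝ) - 1)) ∧
            ∃ s, α ((2:ℝ) ^ (-(k:ℝ))) ≤ s ∧ IsCube Q s}).ncard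

/-!
A hole of side at least `ε 2 ^ (-k)` near a point of `E` fills a proportion `(ε / 3) ^ d` of the
tripled dyadic cube of level `k` around that point. Mark the dyadic cubes having at least `L` such
holes. A given hole serves at most `3 ^ d` cubes of each level, and only levels at which these cubes
are not too large compared to the hole, so by a geometric series the cubes it serves have total
volume at most a constant times `ε ^ (-d)` times its own. As the holes are disjoint, the marked
cubes satisfy a Carleson packing condition with constant of order `A = 1 / (ε ^ d L)`.

By the John–Nirenberg argument the number `N` of marked ancestors then satisfies
`∑ (1 + 1 / (2 A)) ^ N ≤ 2 · #cubes` over the cubes of level `n` below a unit cube. Mean porosity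
says that `N ≥ n / 2` for the cubes that meet `E`, so by Markov's inequality there are only
`O(2 ^ (n (d - 1 / (4 A))))` of them.
-/

section DyadicTree

variable {ι : Type*}

/-- The index of the half-open dyadic cube of side length `2 ^ (-k)` containing `x`. -/
def dyadicIndex (k : ℕ) (x : EuclideanSpace ℝ ι) : ι → ℤ :=
  fun i => ⌊(2 : ℝ) ^ k * x i⌋

open Classical in
/-- The number of marked cubes on the path from the level `k + n` cube of index `w` up to its
ancestor of level `k`, both ends included. Levels are not recorded in indices: the ancestor of `w`
by `i` generations has index the floor quotient `w / 2 ^ i`. -/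
def markedCount (marked : ℕ → (ι → ℤ) → Prop) (k n : ℕ) (w : ι → ℤ) : ℕ :=
  ((Finset.range (n + 1)).filter fun i => marked (k + i) (w / 2 ^ (n - i))).card

lemma ediv_two_pow_ediv_two_pow (w : ι → ℤ) (i j : ℕ) : w / 2 ^ j / 2 ^ i = w / 2 ^ (i + j) := by
  funext l
  simp only [Pi.div_apply, Pi.pow_apply, Pi.ofNat_apply]
  rw [Int.ediv_ediv_of_nonneg (by positivity), pow_add, mul_comm]

lemma dyadicIndex_add_ediv (k j : ℕ) (x : EuclideanSpace ℝ ι) :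
    dyadicIndex (k + j) x / 2 ^ j = dyadicIndex k x := by
  funext i
  have h := Int.natCast_mul_floor_div_cancel (n := 2 ^ j) (by positivity) ((2 : ℝ) ^ k * x i)
  simp only [dyadicIndex, Pi.div_apply, Pi.pow_apply, Pi.ofNat_apply]
  rw [← h, pow_add]
  push_cast
  ring_nf

open Classical in
lemma markedCount_dyadicIndex (marked : ℕ → (ι → ℤ) → Prop) (n : ℕ) (x : EuclideanSpace ℝ ι) :
    markedCount marked 0 n (dyadicIndex n x) =
      ((Finset.range (n + 1)).filter fun k => marked k (dyadicIndex k x)).card := by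
  refine congrArg _ (Finset.filter_congr fun k hk => ?_)
  have hkn : k + (n - k) = n := Nat.add_sub_cancel' (Finset.mem_range_succ_iff.1 hk)
  rw [zero_add, ← dyadicIndex_add_ediv k (n - k), hkn]

open Classical in
lemma markedCount_zero (marked : ℕ → (ι → ℤ) → Prop) (k : ℕ) (w : ι → ℤ) :
    markedCount marked k 0 w = if marked k w then 1 else 0 := by
  have hw : w / 1 = w := funext fun _ => Int.ediv_one _
  simp only [markedCount, Finset.card_filter, zero_add, Finset.sum_range_one, Nat.sub_zero,
    add_zero, pow_zero, hw]

open Classical in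
lemma markedCount_succ (marked : ℕ → (ι → ℤ) → Prop) (k n : ℕ) (w : ι → ℤ) :
    markedCount marked k (n + 1) w =
      markedCount marked (k + 1) n w + if marked k (w / 2 ^ (n + 1)) then 1 else 0 := by
  simp only [markedCount, Finset.card_filter]
  rw [Finset.sum_range_succ']
  simp only [Nat.add_sub_add_right, Nat.sub_zero, add_zero, add_right_comm k 1, add_assoc k]

variable [Fintype ι]

open Classical in
/-- The indices of the dyadic cubes `n` generations below the cube of index `m`. -/
def descendants (n : ℕ) (m : ι → ℤ) : Finset (ι → ℤ) :=
  Fintype.piFinset fun i => Finset.Ico (m i * 2 ^ n) ((m i + 1) * 2 ^ n)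

lemma mem_descendants {n : ℕ} {m w : ι → ℤ} : w ∈ descendants n m ↔ w / 2 ^ n = m := by
  have hpos : (0 : ℤ) < 2 ^ n := by positivity
  simp only [descendants, Fintype.mem_piFinset, Finset.mem_Ico, funext_iff, Pi.div_apply,
    Pi.pow_apply, Pi.ofNat_apply, Int.ediv_eq_iff_of_pos hpos, add_mul, one_mul]

lemma descendants_zero (m : ι → ℤ) : descendants 0 m = {m} := by
  ext w
  simp only [mem_descendants, Finset.mem_singleton, pow_zero, funext_iff, Pi.div_apply,
    Pi.one_apply, Int.ediv_one]

lemma card_descendants (n : ℕ) (m : ι → ℤ) :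
    (descendants n m).card = (2 ^ Fintype.card ι) ^ n := by
  have hcard (a : ℤ) : ((a + 1) * 2 ^ n - a * 2 ^ n).toNat = 2 ^ n := by
    rw [← sub_mul, add_sub_cancel_left, one_mul]
    exact Int.toNat_natCast (2 ^ n)
  simp only [descendants, Fintype.card_piFinset, Int.card_Ico, hcard, Finset.prod_const,
    Finset.card_univ, pow_right_comm]

lemma sum_descendants_add {M : Type*} [AddCommMonoid M] (i j : ℕ) (m : ι → ℤ) (f : (ι → ℤ) → M) :
    ∑ w ∈ descendants (i + j) m, f w = ∑ v ∈ descendants i m, ∑ w ∈ descendants j v, f w := by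
  classical
  rw [← Finset.sum_fiberwise_of_maps_to (g := fun w => w / 2 ^ j) (t := descendants i m)]
  · refine Finset.sum_congr rfl fun v hv => Finset.sum_congr ?_ fun _ _ => rfl
    ext w
    simp only [Finset.mem_filter, mem_descendants, ← ediv_two_pow_ediv_two_pow w i j] at hv ⊢
    exact ⟨And.right, fun hw => ⟨hw ▸ hv, hw⟩⟩
  · intro w hw
    simpa only [mem_descendants, ediv_two_pow_ediv_two_pow] using hw

open Classical in
lemma sum_markedCount_descendants (marked : ℕ → (ι → ℤ) → Prop) (k n : ℕ) (m : ι → ℤ) :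
    ∑ w ∈ descendants n m, markedCount marked k n w =
      ∑ i ∈ Finset.range (n + 1), (2 ^ Fintype.card ι) ^ (n - i) *
        ((descendants i m).filter fun v => marked (k + i) v).card := by
  simp only [markedCount, Finset.card_filter]
  rw [Finset.sum_comm]
  refine Finset.sum_congr rfl fun i hi => ?_
  have hin : n = i + (n - i) := (Nat.add_sub_cancel' (Finset.mem_range_succ_iff.1 hi)).symm
  conv_lhs => rw [hin, add_tsub_cancel_left, sum_descendants_add]
  rw [Finset.mul_sum]
  refine Finset.sum_congr rfl fun v _ => ?_
  rw [← card_descendants (n - i) v, ← smul_eq_mul, ← Finset.sum_const]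
  exact Finset.sum_congr rfl fun w hw => by rw [mem_descendants.1 hw]

end DyadicTree

section Carleson

variable {ι : Type*} [Fintype ι] {marked : ℕ → (ι → ℤ) → Prop} {A : ℝ}

/-- The Carleson packing condition with constant `A`: below every dyadic cube, the number of marked
cubes on a path is at most `A` on average, down to any depth. -/
def CarlesonPacking (marked : ℕ → (ι → ℤ) → Prop) (A : ℝ) : Prop :=
  ∀ k n m, ∑ w ∈ descendants n m, (markedCount marked k n w : ℝ) ≤ A * (descendants n m).card

namespace CarlesonPacking

lemma one_le (h : CarlesonPacking marked A) {k : ℕ} {m : ι → ℤ} (hm : marked k m) : 1 ≤ A := by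
  have hroot := h k 0 m
  rw [descendants_zero, Finset.sum_singleton, markedCount_zero, if_pos hm] at hroot
  simpa only [Nat.cast_one, Finset.card_singleton, mul_one] using hroot

-- A dyadic form of the John–Nirenberg inequality. A marked root costs a factor `1 + (2 * A)⁻¹`,
-- which the second term pays for because packing keeps it below the first.
lemma sum_one_add_pow_markedCount_le (h : CarlesonPacking marked A) (hA : 0 < A) (k n : ℕ)
    (m : ι → ℤ) :
    ∑ w ∈ descendants n m, (1 + (2 * A)⁻¹) ^ markedCount marked k n w ≤
      (descendants n m).card + A⁻¹ * ∑ w ∈ descendants n m, (markedCount marked k n w : ℝ) := by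
  induction n generalizing k m with
  | zero =>
    simp only [descendants_zero, Finset.sum_singleton, Finset.card_singleton, markedCount_zero]
    have ht : (2 * A)⁻¹ ≤ A⁻¹ := by gcongr; linarith
    split_ifs
    · simpa only [pow_one, Nat.cast_one, mul_one, add_le_add_iff_left] using ht
    · simp only [pow_zero, Nat.cast_one, Nat.cast_zero, mul_zero, add_zero, le_refl]
  | succ n ih =>
    have hchildren :
        ∑ w ∈ descendants (n + 1) m, (1 + (2 * A)⁻¹) ^ markedCount marked (k + 1) n w ≤
          (descendants (n + 1) m).card +
            A⁻¹ * ∑ w ∈ descendants (n + 1) m, (markedCount marked (k + 1) n w : ℝ) := by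
      simp only [Finset.card_eq_sum_ones, Nat.cast_sum, add_comm n, sum_descendants_add,
        Finset.mul_sum (descendants 1 m), ← Finset.sum_add_distrib]
      refine Finset.sum_le_sum fun v _ => ?_
      simpa only [Finset.card_eq_sum_ones, Nat.cast_sum] using ih (k + 1) v
    classical
    have hroot (f : ℕ → ℝ) : ∑ w ∈ descendants (n + 1) m, f (markedCount marked k (n + 1) w) =
        ∑ w ∈ descendants (n + 1) m,
          f (markedCount marked (k + 1) n w + if marked k m then 1 else 0) :=
      Finset.sum_congr rfl fun w hw => by rw [markedCount_succ, mem_descendants.1 hw]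
    have hpacking := h k (n + 1) m
    rw [hroot Nat.cast] at hpacking ⊢
    rw [hroot fun c => (1 + (2 * A)⁻¹) ^ c]
    by_cases hm : marked k m
    · simp only [if_pos hm, pow_succ, ← Finset.sum_mul, Nat.cast_succ, Finset.sum_add_distrib,
        Finset.sum_const, nsmul_one] at hpacking ⊢
      set N := ((descendants (n + 1) m).card : ℝ)
      set S := ∑ w ∈ descendants (n + 1) m, (markedCount marked (k + 1) n w : ℝ)
      have hS : A⁻¹ * S ≤ N := (inv_mul_le_iff₀ hA).2 (by linarith [show (0 : ℝ) ≤ N by positivity])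
      calc _ ≤ (N + A⁻¹ * S) * (1 + (2 * A)⁻¹) := by gcongr
        _ = N + A⁻¹ * S + (2 * A)⁻¹ * (N + A⁻¹ * S) := by ring
        _ ≤ N + A⁻¹ * S + (2 * A)⁻¹ * (N + N) := by gcongr
        _ = N + A⁻¹ * (S + N) := by field_simp; ring
    · simpa only [if_neg hm, add_zero] using hchildren

lemma sum_one_add_pow_markedCount_le_two_mul (h : CarlesonPacking marked A) (hA : 0 < A) (k n : ℕ)
    (m : ι → ℤ) :
    ∑ w ∈ descendants n m, (1 + (2 * A)⁻¹) ^ markedCount marked k n w ≤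
      2 * (descendants n m).card := by
  have hpacking : A⁻¹ * ∑ w ∈ descendants n m, (markedCount marked k n w : ℝ) ≤
      (descendants n m).card := (inv_mul_le_iff₀ hA).2 (h k n m)
  linarith [h.sum_one_add_pow_markedCount_le hA k n m]

end CarlesonPacking
end Carleson

section HausdorffDimension

open Filter Topology

variable {ι : Type*} [Fintype ι]

lemma ediam_dyadicIndex_fiber_le (n : ℕ) (m : ι → ℤ) :
    ediam {x : EuclideanSpace ℝ ι | dyadicIndex n x = m} ≤
      ENNReal.ofReal (√(Fintype.card ι) * (2 ^ n)⁻¹) := by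
  refine ediam_le fun x hx y hy => ?_
  have hcoord (i : ι) : dist (x i) (y i) ≤ (2 ^ n)⁻¹ := by
    have hxy : ⌊(2 : ℝ) ^ n * x i⌋ = ⌊(2 : ℝ) ^ n * y i⌋ := congrFun (hx.trans hy.symm) i
    have habs := Int.abs_sub_lt_one_of_floor_eq_floor hxy
    rw [← mul_sub, abs_mul, abs_of_pos (by positivity)] at habs
    rw [Real.dist_eq, ← one_div, le_div_iff₀' (by positivity)]
    exact habs.le
  rw [edist_dist, EuclideanSpace.dist_eq, ← Real.sqrt_sq (by positivity : (0 : ℝ) ≤ (2 ^ n)⁻¹),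
    ← Real.sqrt_mul (Nat.cast_nonneg _)]
  refine ENNReal.ofReal_le_ofReal (Real.sqrt_le_sqrt ?_)
  calc ∑ i, dist (x i) (y i) ^ 2 ≤ ∑ _i : ι, ((2 : ℝ) ^ n)⁻¹ ^ 2 := by
        gcongr with i; exact hcoord i
    _ = Fintype.card ι * ((2 : ℝ) ^ n)⁻¹ ^ 2 := by
        rw [Finset.sum_const, nsmul_eq_mul, Finset.card_univ]

lemma dimH_le_of_card_dyadic_cover_le {s A : ℝ} (hs : 0 ≤ s) {E : Set (EuclideanSpace ℝ ι)}
    {X : ℕ → Finset (ι → ℤ)} (hcover : ∀ᶠ n in atTop, ∀ x ∈ E, dyadicIndex n x ∈ X n)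
    (hcard : ∃ᶠ n in atTop, ((X n).card : ℝ) ≤ A * ((2 : ℝ) ^ n) ^ s) :
    dimH E ≤ ENNReal.ofReal s := by
  refine dimH_le_of_hausdorffMeasure_ne_top ?_
  rw [Real.coe_toNNReal s hs]
  set r : ℕ → ℝ := fun n => √(Fintype.card ι) * (2 ^ n)⁻¹
  have hr : Tendsto (fun n => ENNReal.ofReal (r n)) atTop (𝓝 0) := by
    rw [← ENNReal.ofReal_zero, ← mul_zero √(Fintype.card ι)]
    refine ENNReal.tendsto_ofReal (Tendsto.const_mul _ ?_)
    exact (tendsto_pow_atTop_atTop_of_one_lt one_lt_two).inv_tendsto_atTop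
  have hdiam (n : ℕ) (m : ι → ℤ) :
      ediam {x : EuclideanSpace ℝ ι | dyadicIndex n x = m} ≤ ENNReal.ofReal (r n) :=
    ediam_dyadicIndex_fiber_le n m
  have hle := Measure.hausdorffMeasure_le_liminf_sum s E _ hr
    (fun n (m : X n) => {x | dyadicIndex n x = m}) (.of_forall fun n m => hdiam n m)
    (hcover.mono fun n hn x hx => mem_iUnion.2 ⟨⟨_, hn x hx⟩, rfl⟩)
  refine ne_top_of_le_ne_top ENNReal.ofReal_ne_top (hle.trans (liminf_le_of_frequently_le'
    (hcard.mono fun n hn => ?_)) : _ ≤ ENNReal.ofReal (A * √(Fintype.card ι) ^ s))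
  calc ∑ m : X n, ediam {x : EuclideanSpace ℝ ι | dyadicIndex n x = m} ^ s
      ≤ ∑ _m : X n, ENNReal.ofReal (r n) ^ s := by
        gcongr with m; exact hdiam n m
    _ = ENNReal.ofReal ((X n).card * r n ^ s) := by
        rw [Finset.sum_const, nsmul_eq_mul, Finset.card_univ, Fintype.card_coe,
          ENNReal.ofReal_rpow_of_nonneg (by positivity) hs, ENNReal.ofReal_mul (by positivity),
          ENNReal.ofReal_natCast]
    _ ≤ ENNReal.ofReal (A * √(Fintype.card ι) ^ s) := by
        refine ENNReal.ofReal_le_ofReal ?_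
        calc (X n).card * r n ^ s ≤ A * ((2 : ℝ) ^ n) ^ s * r n ^ s := by gcongr
          _ = A * √(Fintype.card ι) ^ s := by
            rw [mul_assoc, ← Real.mul_rpow (by positivity) (by positivity)]
            congr 2
            rw [mul_left_comm, mul_inv_cancel₀ (by positivity), mul_one]

end HausdorffDimension

namespace CarlesonPacking

open Filter

variable {ι : Type*} [Fintype ι] {marked : ℕ → (ι → ℤ) → Prop} {A : ℝ}

open Classical in
lemma card_filter_half_marked_le (h : CarlesonPacking marked A) (hA : 1 ≤ A) (k n : ℕ) (m : ι → ℤ) :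
    (((descendants n m).filter fun w => n ≤ 2 * markedCount marked k n w).card : ℝ) ≤
      2 * ((2 : ℝ) ^ n) ^ (Fintype.card ι - (4 * A)⁻¹) := by
  have hbernoulli : (2 : ℝ) ^ (2 * A)⁻¹ ≤ 1 + (2 * A)⁻¹ := by
    simpa only [one_add_one_eq_two, mul_one] using rpow_one_add_le_one_add_mul_self
      (s := 1) (by norm_num) (p := (2 * A)⁻¹) (by positivity) (inv_le_one_of_one_le₀ (by linarith))
  have hmarkov (w) (hw : n ≤ 2 * markedCount marked k n w) :
      ((2 : ℝ) ^ n) ^ (4 * A)⁻¹ ≤ (1 + (2 * A)⁻¹) ^ markedCount marked k n w := by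
    have hw' : (n : ℝ) ≤ 2 * markedCount marked k n w := mod_cast hw
    calc ((2 : ℝ) ^ n) ^ (4 * A)⁻¹ = 2 ^ (n * (4 * A)⁻¹) := by
          rw [← Real.rpow_natCast_mul zero_le_two]
      _ ≤ 2 ^ (2 * markedCount marked k n w * (4 * A)⁻¹) := by gcongr; exact one_le_two
      _ = (2 ^ (2 * A)⁻¹) ^ markedCount marked k n w := by
          rw [← Real.rpow_mul_natCast zero_le_two]
          congr 1
          field_simp
          ring
      _ ≤ _ := by gcongr
  rw [Real.rpow_sub (by positivity), mul_div_assoc', le_div_iff₀ (by positivity)]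
  calc _ ≤ ∑ w ∈ (descendants n m).filter fun w => n ≤ 2 * markedCount marked k n w,
        (1 + (2 * A)⁻¹) ^ markedCount marked k n w := by
        rw [← nsmul_eq_mul]
        exact Finset.card_nsmul_le_sum _ _ _ fun w hw => hmarkov w (Finset.mem_filter.1 hw).2
    _ ≤ ∑ w ∈ descendants n m, (1 + (2 * A)⁻¹) ^ markedCount marked k n w :=
        Finset.sum_le_sum_of_subset_of_nonneg (Finset.filter_subset _ _)
          fun _ _ _ => by positivity
    _ ≤ 2 * (descendants n m).card :=
        h.sum_one_add_pow_markedCount_le_two_mul (by positivity) k n m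
    _ = 2 * ((2 : ℝ) ^ n) ^ (Fintype.card ι : ℝ) := by
        rw [card_descendants, Real.rpow_natCast, pow_right_comm]
        push_cast
        rfl

lemma dimH_le [Nonempty ι] (h : CarlesonPacking marked A) {E : Set (EuclideanSpace ℝ ι)} {j₀ : ℕ}
    (hE : ∀ x ∈ E, ∀ n ≥ j₀, n ≤ 2 * markedCount marked 0 n (dyadicIndex n x)) :
    dimH E ≤ ENNReal.ofReal (Fintype.card ι - (4 * A)⁻¹) := by
  classical
  obtain rfl | ⟨x₀, hx₀⟩ := E.eq_empty_or_nonempty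
  · simp only [dimH_empty, zero_le]
  have hA : 1 ≤ A := by
    have hpos : 0 < markedCount marked 0 (j₀ + 1) (dyadicIndex (j₀ + 1) x₀) := by
      have := hE x₀ hx₀ (j₀ + 1) (Nat.le_succ j₀)
      omega
    obtain ⟨i, hi⟩ := Finset.card_pos.1 hpos
    exact h.one_le (Finset.mem_filter.1 hi).2
  have hs : 0 ≤ (Fintype.card ι : ℝ) - (4 * A)⁻¹ := by
    have hcard : (1 : ℝ) ≤ Fintype.card ι := mod_cast Fintype.card_pos
    have hinv : (4 * A)⁻¹ ≤ 1 := inv_le_one_of_one_le₀ (by linarith)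
    linarith
  have hpiece (r : ι → ℤ) : dimH (E ∩ {x | dyadicIndex 0 x = r}) ≤
      ENNReal.ofReal (Fintype.card ι - (4 * A)⁻¹) := by
    refine dimH_le_of_card_dyadic_cover_le hs (A := 2)
      (X := fun n => (descendants n r).filter fun w => n ≤ 2 * markedCount marked 0 n w) ?_
      (.of_forall fun n => h.card_filter_half_marked_le hA 0 n r)
    filter_upwards [eventually_ge_atTop j₀] with n hn x ⟨hxE, hxr⟩
    refine Finset.mem_filter.2 ⟨?_, hE x hxE n hn⟩
    rw [mem_descendants, ← hxr, ← dyadicIndex_add_ediv 0 n x, zero_add]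
  calc dimH E = dimH (⋃ r : ι → ℤ, E ∩ {x | dyadicIndex 0 x = r}) := by
        rw [← inter_iUnion, iUnion_eq_univ_iff.2 fun x => ⟨dyadicIndex 0 x, rfl⟩, inter_univ]
    _ = ⨆ r : ι → ℤ, dimH (E ∩ {x | dyadicIndex 0 x = r}) := dimH_iUnion _
    _ ≤ ENNReal.ofReal (Fintype.card ι - (4 * A)⁻¹) := iSup_le hpiece

end CarlesonPacking

section Counting

open Classical in
lemma mul_card_filter_le_sum_card_filter {α β : Type*} {s : Finset α} {t : Finset β}
    {p : α → Prop} {r : α → β → Prop} {L : ℝ}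
    (h : ∀ a ∈ s, p a → L ≤ (t.filter fun b => r a b).card) :
    L * (s.filter p).card ≤ ∑ b ∈ t, ((s.filter fun a => r a b).card : ℝ) := by
  have hswap : ∑ b ∈ t, (s.filter fun a => r a b).card = ∑ a ∈ s, (t.filter fun b => r a b).card :=
    (Finset.sum_card_bipartiteAbove_eq_sum_card_bipartiteBelow r).symm
  rw [← Nat.cast_sum, hswap, Nat.cast_sum, mul_comm, ← nsmul_eq_mul]
  calc _ ≤ ∑ a ∈ s.filter p, ((t.filter fun b => r a b).card : ℝ) :=
        Finset.card_nsmul_le_sum _ _ _ fun a ha =>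
          h a (Finset.mem_filter.1 ha).1 (Finset.mem_filter.1 ha).2
    _ ≤ _ := Finset.sum_le_sum_of_subset_of_nonneg (Finset.filter_subset _ _)
        fun _ _ _ => Nat.cast_nonneg _

lemma sum_pow_le_div_one_sub {q a : ℝ} (hq₀ : 0 ≤ q) (hq₁ : q < 1) (ha : 0 ≤ a) {I : Finset ℕ}
    (hI : ∀ i ∈ I, q ^ i ≤ a) : ∑ i ∈ I, q ^ i ≤ a / (1 - q) := by
  obtain rfl | hne := I.eq_empty_or_nonempty
  · exact div_nonneg ha (sub_nonneg.2 hq₁.le)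
  calc ∑ i ∈ I, q ^ i ≤ ∑ i ∈ Finset.Ico (I.min' hne) (I.max' hne + 1), q ^ i :=
        Finset.sum_le_sum_of_subset_of_nonneg
          (fun i hi => Finset.mem_Ico.2 ⟨I.min'_le i hi, Nat.lt_succ_of_le (I.le_max' i hi)⟩)
          fun _ _ _ => by positivity
    _ ≤ q ^ I.min' hne / (1 - q) := geom_sum_Ico_le_of_lt_one hq₀ hq₁
    _ ≤ a / (1 - q) := div_le_div_of_nonneg_right (hI _ (I.min'_mem hne)) (sub_nonneg.2 hq₁.le)

end Counting

section Volume

lemma sum_measureReal_le_of_pairwiseDisjoint {X : Type*} [MeasurableSpace X] {μ : Measure X}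
    {T : Finset (Set X)} (hdisj : (T : Set (Set X)).PairwiseDisjoint id)
    (hmeas : ∀ Q ∈ T, MeasurableSet Q) {A : Set X} (hsub : ∀ Q ∈ T, Q ⊆ A) (hA : μ A ≠ ⊤) :
    ∑ Q ∈ T, μ.real Q ≤ μ.real A := by
  calc ∑ Q ∈ T, μ.real Q = μ.real (⋃ Q ∈ T, Q) :=
        (measureReal_biUnion_finset hdisj hmeas
          fun Q hQ => measure_ne_top_of_subset (hsub Q hQ) hA).symm
    _ ≤ μ.real A := measureReal_mono (iUnion₂_subset hsub) hA

variable {ι : Type*} [Fintype ι]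

lemma volume_setOf_forall_mem {B : ι → Set ℝ} (hB : ∀ i, MeasurableSet (B i)) :
    volume {x : EuclideanSpace ℝ ι | ∀ i, x i ∈ B i} = ∏ i, volume (B i) := by
  rw [← volume_pi_pi, ← (EuclideanSpace.volume_preserving_symm_measurableEquiv_toLp
    ι).measure_preimage (MeasurableSet.univ_pi hB).nullMeasurableSet]
  congr 1
  ext x
  simp only [mem_ofPred_eq, mem_preimage, mem_univ_pi, MeasurableEquiv.coe_toLp_symm]

lemma IsCube.measurableSet {d : ℕ} {Q : Set (EuclideanSpace ℝ (Fin d))} {s : ℝ}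
    (hQ : IsCube Q s) : MeasurableSet Q := by
  obtain ⟨-, c, rfl⟩ := hQ
  rw [ofPred_forall]
  exact .iInter fun i => measurableSet_Ioo.preimage (by fun_prop)

lemma IsCube.volume_real {d : ℕ} {Q : Set (EuclideanSpace ℝ (Fin d))} {s : ℝ} (hQ : IsCube Q s) :
    volume.real Q = s ^ d := by
  obtain ⟨hs, c, rfl⟩ := hQ
  rw [measureReal_def, volume_setOf_forall_mem fun _ => measurableSet_Ioo]
  simp only [Real.volume_Ioo, add_sub_cancel_left, Finset.prod_const, Finset.card_univ,
    Fintype.card_fin, ENNReal.toReal_pow, ENNReal.toReal_ofReal hs.le]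

end Volume

section Holes

variable {ι : Type*}

/-- The union of the dyadic cube of level `k` and index `m` with its neighbours: the concentric
cube of three times its side length. -/
def tripledCube (k : ℕ) (m : ι → ℤ) : Set (EuclideanSpace ℝ ι) :=
  {x | dyadicIndex k x ∈ Icc (m - 1) (m + 1)}

variable [Fintype ι]

lemma ball_subset_tripledCube (k : ℕ) (x : EuclideanSpace ℝ ι) :
    ball x (2 ^ k)⁻¹ ⊆ tripledCube k (dyadicIndex k x) := by
  intro y hy
  have hcoord (i : ι) : |(2 : ℝ) ^ k * y i - 2 ^ k * x i| < 1 := by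
    rw [← mul_sub, abs_mul, abs_of_pos (by positivity), ← lt_div_iff₀' (by positivity), one_div]
    exact (PiLp.dist_apply_le y x i).trans_lt hy
  simp only [tripledCube, dyadicIndex, mem_ofPred_eq, mem_Icc, Pi.le_def,
    Pi.add_apply, Pi.one_apply, sub_le_iff_le_add, ← Int.floor_add_one]
  refine ⟨fun i => ?_, fun i => ?_⟩
  · exact Int.floor_le_floor (by linarith [abs_lt.1 (hcoord i)])
  · exact Int.floor_le_floor (by linarith [abs_lt.1 (hcoord i)])

lemma tripledCube_subset_of_mem_descendants {k i : ℕ} {m v : ι → ℤ} (hv : v ∈ descendants i m) :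
    tripledCube (k + i) v ⊆ tripledCube k m := by
  rintro x ⟨hlow, hupp⟩
  rw [mem_descendants] at hv
  subst hv
  have hpos : (0 : ℤ) < 2 ^ i := by positivity
  rw [tripledCube, mem_ofPred_eq, ← dyadicIndex_add_ediv k i x]
  refine ⟨fun l => ?_, fun l => ?_⟩
  · calc v l / 2 ^ i - 1 = (v l - 2 ^ i) / 2 ^ i := by
          rw [Int.sub_ediv_of_dvd _ dvd_rfl, Int.ediv_self hpos.ne']
      _ ≤ (v l - 1) / 2 ^ i := Int.ediv_le_ediv hpos (by omega)
      _ ≤ dyadicIndex (k + i) x l / 2 ^ i := Int.ediv_le_ediv hpos (hlow l)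
  · calc dyadicIndex (k + i) x l / 2 ^ i ≤ (v l + 1) / 2 ^ i := Int.ediv_le_ediv hpos (hupp l)
      _ ≤ (v l + 2 ^ i) / 2 ^ i := Int.ediv_le_ediv hpos (by omega)
      _ = v l / 2 ^ i + 1 := by
          rw [Int.add_ediv_of_dvd_right dvd_rfl, Int.ediv_self hpos.ne']

lemma volume_tripledCube (k : ℕ) (m : ι → ℤ) :
    volume (tripledCube k m) = ENNReal.ofReal ((3 / 2 ^ k) ^ Fintype.card ι) := by
  have hbox : tripledCube k m =
      {x : EuclideanSpace ℝ ι | ∀ i, x i ∈ Ico ((m i - 1) / 2 ^ k : ℝ) ((m i + 2) / 2 ^ k)} := by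
    ext x
    simp only [tripledCube, mem_ofPred_eq, mem_Icc, mem_Ico, Pi.le_def, ← forall_and]
    refine forall_congr' fun i => and_congr ?_ ?_
    · rw [div_le_iff₀' (by positivity), dyadicIndex, Pi.sub_apply, Int.le_floor]
      push_cast [Pi.one_apply]
      rfl
    · rw [lt_div_iff₀' (by positivity), dyadicIndex, Pi.add_apply, ← Int.lt_add_one_iff,
        Int.floor_lt]
      push_cast [Pi.one_apply]
      rw [add_assoc, one_add_one_eq_two]
  rw [hbox, volume_setOf_forall_mem fun _ => measurableSet_Ico]
  simp only [Real.volume_Ico, ← sub_div, add_sub_sub_cancel, Finset.prod_const, Finset.card_univ]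
  rw [ENNReal.ofReal_pow (by positivity)]
  norm_num

lemma volume_real_tripledCube (k : ℕ) (m : ι → ℤ) :
    volume.real (tripledCube k m) = (3 / 2 ^ k) ^ Fintype.card ι := by
  rw [measureReal_def, volume_tripledCube, ENNReal.toReal_ofReal (by positivity)]

lemma volume_real_tripledCube_add (k i : ℕ) (m v : ι → ℤ) :
    volume.real (tripledCube (k + i) v) =
      (2 ^ Fintype.card ι)⁻¹ ^ i * volume.real (tripledCube k m) := by
  rw [volume_real_tripledCube, volume_real_tripledCube, pow_add, ← inv_pow, pow_right_comm,
    ← mul_pow]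
  congr 1
  rw [inv_pow]
  field_simp

/-- `Q` is a hole of the dyadic cube of level `k` and index `m` if it lies in the tripled cube and
occupies at least the proportion `δ` of its volume. -/
def IsHole (δ : ℝ) (k : ℕ) (m : ι → ℤ) (Q : Set (EuclideanSpace ℝ ι)) : Prop :=
  Q ⊆ tripledCube k m ∧ δ * volume.real (tripledCube k m) ≤ volume.real Q

/-- The dyadic cube of level `k` and index `m` has at least `L` holes in the family `D`. -/
def HasHoles (D : Set (Set (EuclideanSpace ℝ ι))) (δ L : ℝ) (k : ℕ) (m : ι → ℤ) : Prop :=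
  ∃ T : Finset (Set (EuclideanSpace ℝ ι)), ↑T ⊆ D ∧ L ≤ T.card ∧ ∀ Q ∈ T, IsHole δ k m Q

variable {δ : ℝ} {k : ℕ} {Q : Set (EuclideanSpace ℝ ι)}

lemma IsHole.nonempty {m : ι → ℤ} (hQ : IsHole δ k m Q) (hδ : 0 < δ) : Q.Nonempty := by
  rw [nonempty_iff_ne_empty]
  rintro rfl
  have hvol := hQ.2
  rw [measureReal_empty, volume_real_tripledCube] at hvol
  exact hvol.not_gt (by positivity)

lemma IsHole.pow_le_div {i : ℕ} {v : ι → ℤ} (hQ : IsHole δ (k + i) v Q) (hδ : 0 < δ) (m : ι → ℤ) :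
    (2 ^ Fintype.card ι)⁻¹ ^ i ≤ volume.real Q / (δ * volume.real (tripledCube k m)) := by
  have hV : 0 < volume.real (tripledCube k m) := by
    rw [volume_real_tripledCube]
    positivity
  rw [le_div_iff₀ (by positivity), mul_left_comm, ← volume_real_tripledCube_add k i m v]
  exact hQ.2

open Classical in
lemma card_filter_isHole_le (hδ : 0 < δ) (X : Finset (ι → ℤ)) :
    (X.filter fun v => IsHole δ k v Q).card ≤ 3 ^ Fintype.card ι := by
  obtain hempty | ⟨v₀, hv₀⟩ := (X.filter fun v => IsHole δ k v Q).eq_empty_or_nonempty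
  · rw [hempty]
    exact Nat.zero_le _
  obtain ⟨y, hy⟩ := (Finset.mem_filter.1 hv₀).2.nonempty hδ
  set u := dyadicIndex k y
  have hsub : (X.filter fun v => IsHole δ k v Q) ⊆ Finset.Icc (u - 1) (u + 1) := by
    intro v hv
    obtain ⟨hlow, hupp⟩ := (Finset.mem_filter.1 hv).2.1 hy
    exact Finset.mem_Icc.2 ⟨sub_le_iff_le_add.2 hupp, sub_le_iff_le_add.1 hlow⟩
  have hcard (i : ι) : ((u i + 1) + 1 - (u i - 1)).toNat = 3 := by omega
  calc (X.filter fun v => IsHole δ k v Q).card ≤ (Finset.Icc (u - 1) (u + 1)).card :=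
        Finset.card_le_card hsub
    _ = 3 ^ Fintype.card ι := by
        simp only [Pi.card_Icc, Int.card_Icc, Pi.add_apply, Pi.sub_apply, Pi.one_apply, hcard,
          Finset.prod_const, Finset.card_univ]

open Classical in
lemma sum_card_filter_isHole_le [Nonempty ι] (hδ : 0 < δ) (n : ℕ) (m : ι → ℤ) :
    ∑ i ∈ Finset.range (n + 1), ((2 : ℝ) ^ Fintype.card ι) ^ (n - i) *
        ((descendants i m).filter fun v => IsHole δ (k + i) v Q).card ≤
      (2 ^ Fintype.card ι) ^ n * (2 * 3 ^ Fintype.card ι / δ) *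
        (volume.real Q / volume.real (tripledCube k m)) := by
  set q : ℝ := (2 ^ Fintype.card ι)⁻¹
  set a := volume.real Q / (δ * volume.real (tripledCube k m))
  have hq : q ≤ 1 / 2 := by
    rw [one_div]
    exact inv_anti₀ two_pos (le_self_pow₀ one_le_two Fintype.card_ne_zero)
  have hscale (i : ℕ) :
      q ^ i * ((descendants i m).filter fun v => IsHole δ (k + i) v Q).card ≤
        3 ^ Fintype.card ι * if q ^ i ≤ a then q ^ i else 0 := by
    split_ifs with hi
    · rw [mul_comm]
      gcongr
      exact_mod_cast card_filter_isHole_le hδ _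
    · rw [Finset.filter_eq_empty_iff.2 fun v _ hv => hi (hv.pow_le_div hδ m),
        Finset.card_empty, Nat.cast_zero, mul_zero, mul_zero]
  calc _ ≤ ∑ i ∈ Finset.range (n + 1), (2 ^ Fintype.card ι) ^ n *
        (3 ^ Fintype.card ι * if q ^ i ≤ a then q ^ i else 0) := by
        refine Finset.sum_le_sum fun i hi => ?_
        rw [pow_sub₀ _ (by positivity) (Finset.mem_range_succ_iff.1 hi), ← inv_pow, mul_assoc]
        exact mul_le_mul_of_nonneg_left (hscale i) (by positivity)
    _ = (2 ^ Fintype.card ι) ^ n * (3 ^ Fintype.card ι *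
          ∑ i ∈ (Finset.range (n + 1)).filter fun i => q ^ i ≤ a, q ^ i) := by
        rw [← Finset.mul_sum, ← Finset.mul_sum, Finset.sum_filter]
    _ ≤ (2 ^ Fintype.card ι) ^ n * (3 ^ Fintype.card ι * (a / (1 - q))) := by
        gcongr
        exact sum_pow_le_div_one_sub (by positivity) (by linarith) (by positivity)
          fun i hi => (Finset.mem_filter.1 hi).2
    _ ≤ (2 ^ Fintype.card ι) ^ n * (3 ^ Fintype.card ι * (a / (1 / 2))) := by
        gcongr
        linarith
    _ = _ := by
        simp only [a]
        field_simp

open Classical in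
lemma exists_finset_le_card_isHole (D : Set (Set (EuclideanSpace ℝ ι))) (δ L : ℝ) (k n : ℕ)
    (m : ι → ℤ) :
    ∃ U : Finset (Set (EuclideanSpace ℝ ι)), ↑U ⊆ D ∧ (∀ Q ∈ U, Q ⊆ tripledCube k m) ∧
      ∀ i ∈ Finset.range (n + 1), ∀ v ∈ descendants i m, HasHoles D δ L (k + i) v →
        L ≤ (U.filter fun Q => IsHole δ (k + i) v Q).card := by
  have hwitness (i : ℕ) (v : ι → ℤ) : ∃ T : Finset (Set (EuclideanSpace ℝ ι)), ↑T ⊆ D ∧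
      (∀ Q ∈ T, IsHole δ (k + i) v Q) ∧ (HasHoles D δ L (k + i) v → L ≤ T.card) := by
    by_cases hv : HasHoles D δ L (k + i) v
    · obtain ⟨T, hTD, hTL, hT⟩ := hv
      exact ⟨T, hTD, hT, fun _ => hTL⟩
    · exact ⟨∅, by simp, by simp, fun h => absurd h hv⟩
  choose T hTD hT hTL using hwitness
  refine ⟨(Finset.range (n + 1)).biUnion fun i => (descendants i m).biUnion (T i), ?_, ?_, ?_⟩
  · simp only [Finset.coe_biUnion, iUnion_subset_iff]
    exact fun i _ v _ => hTD i v
  · simp only [Finset.mem_biUnion]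
    rintro Q ⟨i, -, v, hv, hQ⟩
    exact (hT i v Q hQ).1.trans (tripledCube_subset_of_mem_descendants hv)
  · intro i hi v hv hvL
    refine (hTL i v hvL).trans (Nat.cast_le.2 (Finset.card_le_card fun Q hQ => ?_))
    simp only [Finset.mem_filter, Finset.mem_biUnion]
    exact ⟨⟨i, hi, v, hv, hQ⟩, hT i v Q hQ⟩

lemma carlesonPacking_hasHoles [Nonempty ι] {D : Set (Set (EuclideanSpace ℝ ι))}
    (hdisj : D.PairwiseDisjoint id) (hmeas : ∀ Q ∈ D, MeasurableSet Q) {L : ℝ} (hδ : 0 < δ)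
    (hL : 0 < L) : CarlesonPacking (HasHoles D δ L) (2 * 3 ^ Fintype.card ι / (δ * L)) := by
  classical
  intro k n m
  obtain ⟨U, hUD, hUsub, hUL⟩ := exists_finset_le_card_isHole D δ L k n m
  set N : ℝ := 2 ^ Fintype.card ι
  set K : ℝ := N ^ n * (2 * 3 ^ Fintype.card ι / δ)
  have hlevel (i) (hi : i ∈ Finset.range (n + 1)) :
      L * ((descendants i m).filter fun v => HasHoles D δ L (k + i) v).card ≤
        ∑ Q ∈ U, (((descendants i m).filter fun v => IsHole δ (k + i) v Q).card : ℝ) :=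
    mul_card_filter_le_sum_card_filter (hUL i hi)
  have hvol : ∑ Q ∈ U, volume.real Q ≤ volume.real (tripledCube k m) :=
    sum_measureReal_le_of_pairwiseDisjoint (hdisj.subset hUD) (fun Q hQ => hmeas Q (hUD hQ)) hUsub
      (by rw [volume_tripledCube]; exact ENNReal.ofReal_ne_top)
  have htotal : L * ∑ w ∈ descendants n m, (markedCount (HasHoles D δ L) k n w : ℝ) ≤ K :=
    calc _ = ∑ i ∈ Finset.range (n + 1), N ^ (n - i) *
          (L * ((descendants i m).filter fun v => HasHoles D δ L (k + i) v).card) := by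
          rw [← Nat.cast_sum, sum_markedCount_descendants, Nat.cast_sum, Finset.mul_sum]
          push_cast
          simp only [N, mul_left_comm L]
      _ ≤ ∑ i ∈ Finset.range (n + 1), N ^ (n - i) *
          ∑ Q ∈ U, (((descendants i m).filter fun v => IsHole δ (k + i) v Q).card : ℝ) := by
          gcongr with i hi
          exact hlevel i hi
      _ = ∑ Q ∈ U, ∑ i ∈ Finset.range (n + 1), N ^ (n - i) *
          ((descendants i m).filter fun v => IsHole δ (k + i) v Q).card := by
          simp only [Finset.mul_sum]
          exact Finset.sum_comm
      _ ≤ ∑ Q ∈ U, K * (volume.real Q / volume.real (tripledCube k m)) :=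
          Finset.sum_le_sum fun Q _ => sum_card_filter_isHole_le hδ n m
      _ = K * ((∑ Q ∈ U, volume.real Q) / volume.real (tripledCube k m)) := by
          rw [← Finset.mul_sum, Finset.sum_div]
      _ ≤ K := mul_le_of_le_one_right (by positivity) (div_le_one_of_le₀ hvol (by positivity))
  calc _ ≤ K / L := (le_div_iff₀' hL).2 htotal
    _ = _ := by
      simp only [K, N, card_descendants, Nat.cast_pow, Nat.cast_ofNat]
      field_simp

end Holes

lemma WeaklyMeanPorous.exists_hasHoles {d : ℕ} {ε L : ℝ} (hε : 0 < ε)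
    {E : Set (EuclideanSpace ℝ (Fin d))}
    (hE : WeaklyMeanPorous E (fun t => ε * t) (fun _ => L)) :
    ∃ D : Set (Set (EuclideanSpace ℝ (Fin d))), D.PairwiseDisjoint id ∧
      (∀ Q ∈ D, MeasurableSet Q) ∧ ∃ j₀, ∀ x ∈ E, ∀ n ≥ j₀,
        n ≤ 2 * markedCount (HasHoles D ((ε / 3) ^ d) L) 0 n (dyadicIndex n x) := by
  classical
  obtain ⟨D, j₀, -, hcube, hdisj, hporous⟩ := hE
  refine ⟨D, hdisj, fun Q hQ => (hcube Q hQ).1.choose_spec.measurableSet, j₀, fun x hx n hn => ?_⟩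
  have hcount := (hporous x hx n hn).trans_le (Nat.cast_le.2 (ncard_le_ncard (t :=
    ((Finset.range (n + 1)).filter fun k => HasHoles D ((ε / 3) ^ d) L k (dyadicIndex k x) :
      Finset ℕ)) ?_))
  · rw [ncard_coe_finset, ← markedCount_dyadicIndex, div_lt_iff₀' two_pos] at hcount
    exact_mod_cast hcount.le
  rintro k ⟨hk, S, hSL, hS⟩
  refine Finset.mem_coe.2 (Finset.mem_filter.2 ⟨Finset.mem_range_succ_iff.2 (Finset.mem_Icc.1 hk).2,
    S, fun Q hQ => (hS Q hQ).1, hSL, fun Q hQ => ?_⟩)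
  obtain ⟨-, hQball, s, hs, hQs⟩ := hS Q hQ
  rw [Real.rpow_neg zero_le_two, Real.rpow_natCast] at hQball hs
  refine ⟨(hQball.trans sdiff_subset).trans (ball_subset_tripledCube k x), ?_⟩
  rw [volume_real_tripledCube, hQs.volume_real, Fintype.card_fin, ← mul_pow]
  refine pow_le_pow_left₀ (by positivity) (le_of_eq_of_le ?_ hs) d
  ring

theorem dimH_le_of_weaklyMeanPorous_general {d : ℕ} (hd : 1 ≤ d) {ε L : ℝ} (hε : 0 < ε)
    (hL : 0 < L) {E : Set (EuclideanSpace ℝ (Fin d))}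
    (hE : WeaklyMeanPorous E (fun t => ε * t) (fun _ => L)) :
    dimH E ≤ ENNReal.ofReal (d - (8 * 9 ^ d)⁻¹ * (ε ^ d * L)) := by
  have : Nonempty (Fin d) := ⟨⟨0, hd⟩⟩
  obtain ⟨D, hdisj, hmeas, j₀, hcount⟩ := hE.exists_hasHoles hε
  have hdim := (carlesonPacking_hasHoles hdisj hmeas (by positivity) hL).dimH_le hcount
  rw [Fintype.card_fin] at hdim
  convert hdim using 3
  have h9 : (9 : ℝ) ^ d = 3 ^ d * 3 ^ d := by rw [← mul_pow]; norm_num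
  rw [div_pow, h9]
  field_simp
  norm_num

/-- **Nieminen's dimension estimate for weakly mean porous sets.** For every `d ≥ 1`
and `c > 0` there is a constant `C(d,c) > 0` such that every compact set `E ⊆ ℝ^d`
that is weakly mean porous with parameters `α(t) = ε·t` and `λ(k) = c·ε⁻¹` satisfies
`dim_H(E) ≤ d - C(d,c)·ε^(d-1)`. -/
theorem dimH_le_of_weaklyMeanPorous (d : ℕ) (hd : 1 ≤ d) (c : ℝ) (hc : 0 < c) :
    ∃ Cdc : ℝ, 0 < Cdc ∧ ∀ ε : ℝ, 0 < ε → ε < 1 →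
      ∀ E : Set (EuclideanSpace ℝ (Fin d)), IsCompact E →
        WeaklyMeanPorous E (fun t => ε * t) (fun _ => c * ε⁻¹) →
        dimH E ≤ ENNReal.ofReal ((d : ℝ) - Cdc * ε ^ (d - 1)) := by
  refine ⟨c / (8 * 9 ^ d), by positivity, fun ε hε _ E _ hE => ?_⟩
  convert dimH_le_of_weaklyMeanPorous_general hd hε (by positivity : 0 < c * ε⁻¹) hE using 3
  rw [← pow_sub_one_mul (Nat.one_le_iff_ne_zero.1 hd) ε]
  field_simp
end
end

section
/- For every J ∈ (0, 1/2) there exists a Jordan domain Ω ⊂ ℝ² that is a J-John domain and whose boundary satisfies dim_H(∂Ω) ≥ 2 − (2/log 2)·J. -/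
open Metric Set MeasureTheory

noncomputable section

/-!
Through the door `[0, 1]` in the upper side of a square enter a room with four doors of length
`r < 1 / 2`: two in the ceiling of a flat strip and two facing each other in a shaft of width `b`.
Behind each of them put a copy of the room scaled by `r`, and so on. The four similarities map the
closed triangle with hypotenuse `[0, 1]` into disjoint subtriangles, so the frontier contains a
strongly separated self-similar set of ratio `r` with four pieces, whose dimension is at least `s`
as soon as `4 * r ^ s ≥ 1`. Being self-similar up to connecting segments, the fractal part of the
frontier is moreover an arc, which the other sides of the square close to a Jordan curve.

A point of a room of generation `n` escapes along segments, the one in generation `k` staying at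
distance of order `r ^ k * b / 2` from the frontier; summing the geometric series shows that every
`J` with `J * √((1 / 2) ^ 2 + ((1 - 2 * r) / 2) ^ 2) ≤ b / 2` is a John constant. Apart from this,
`r` and `b` only have to satisfy `2 * r + b < 1`, so that for `α = 1 - J / log 2` one can take
`r = α / (2 * (α + J))`. Then `s = 2 * α` is admissible, because `α * log (1 + J / α) ≤ J` amounts
to `4 * r ^ (2 * α) ≥ 1`. For `J ≥ log 2 / 2` the bound is at most `1` and a disc suffices.
-/

/-! ### Concatenations of paths -/

section Concatenation

variable {X : Type*} {n : ℕ}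

/-- `Γ` runs on `[0, 1]` through the paths `G 0, …, G n` (each restricted to `[0, 1]`) in this
order, spending the same time on each of them. -/
def IsConcatenation (Γ : ℝ → X) (G : Fin (n + 1) → ℝ → X) : Prop :=
  ∀ k : Fin (n + 1), ∀ s ∈ Icc (0 : ℝ) 1, Γ ((k + s) / (n + 1)) = G k s

theorem exists_fin_add_div_of_mem_Ico (n : ℕ) {t : ℝ} (ht : t ∈ Ico (0 : ℝ) 1) :
    ∃ k : Fin (n + 1), ∃ s ∈ Ico (0 : ℝ) 1, t = (k + s) / (n + 1) := by
  have hn : (0 : ℝ) < n + 1 := by positivity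
  have h0 : 0 ≤ (n + 1) * t := mul_nonneg hn.le ht.1
  have hlt : (n + 1) * t < n + 1 := by nlinarith [ht.2]
  refine ⟨⟨⌊(n + 1) * t⌋₊, ?_⟩, (n + 1) * t - ⌊(n + 1) * t⌋₊, ⟨?_, ?_⟩, ?_⟩
  · rw [Nat.floor_lt h0]
    exact_mod_cast hlt
  · linarith [Nat.floor_le h0]
  · linarith [Nat.lt_floor_add_one ((n + 1) * t)]
  · rw [eq_div_iff hn.ne']
    ring

theorem exists_fin_add_div_of_mem_Icc (n : ℕ) {t : ℝ} (ht : t ∈ Icc (0 : ℝ) 1) :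
    ∃ k : Fin (n + 1), ∃ s ∈ Icc (0 : ℝ) 1, t = (k + s) / (n + 1) := by
  rcases ht.2.lt_or_eq with h | rfl
  · obtain ⟨k, s, hs, hts⟩ := exists_fin_add_div_of_mem_Ico n ⟨ht.1, h⟩
    exact ⟨k, s, Ico_subset_Icc_self hs, hts⟩
  · refine ⟨Fin.last n, 1, right_mem_Icc.2 zero_le_one, ?_⟩
    rw [Fin.val_last, div_self (by positivity)]

theorem fin_add_div_mem_Icc (k : Fin (n + 1)) {s : ℝ} (hs : s ∈ Icc (0 : ℝ) 1) :
    (k + s) / (n + 1) ∈ Icc (0 : ℝ) 1 := by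
  have hk : (k : ℝ) ≤ n := by exact_mod_cast Fin.is_le k
  refine ⟨div_nonneg (add_nonneg k.val.cast_nonneg hs.1) (by positivity), ?_⟩
  rw [div_le_one (by positivity)]
  linarith [hs.2]

theorem exists_continuous_fin_add [TopologicalSpace X] {G : Fin (n + 1) → ℝ → X}
    (hG : ∀ k, Continuous (G k)) (hjoint : ∀ k : Fin n, G k.castSucc 1 = G k.succ 0) :
    ∃ Γ : ℝ → X, Continuous Γ ∧ ∀ k : Fin (n + 1), ∀ s ∈ Icc (0 : ℝ) 1, Γ (k + s) = G k s := by
  induction n with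
  | zero => exact ⟨G 0, hG 0, fun k s _ => by simp [Fin.fin_one_eq_zero k]⟩
  | succ n ih =>
    obtain ⟨Γ, hΓ, hΓG⟩ := ih (G := fun k => G k.castSucc) (fun k => hG _)
      (fun k => by simpa using hjoint k.castSucc)
    have hend : Γ (n + 1) = G (Fin.last (n + 1)) 0 := by
      have h := hΓG (Fin.last n) 1 (by simp)
      rw [Fin.val_last] at h
      rw [h, hjoint, Fin.succ_last]
    refine ⟨fun t => if t ≤ n + 1 then Γ t else G (Fin.last (n + 1)) (t - (n + 1)),
      hΓ.if_le ((hG _).comp (by fun_prop)) continuous_id continuous_const ?_, fun k s hs => ?_⟩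
    · rintro t rfl
      rw [hend, sub_self]
    · induction k using Fin.lastCases with
      | last =>
        rcases hs.1.eq_or_lt with rfl | h
        · simp [hend]
        · simp [h]
      | cast k =>
        have hk : (k : ℝ) + s ≤ n + 1 := by
          have : (k : ℝ) ≤ n := by exact_mod_cast Fin.is_le k
          linarith [hs.2]
        simp only [Fin.val_castSucc, if_pos hk]
        exact hΓG k s hs

theorem exists_continuous_isConcatenation [TopologicalSpace X] {G : Fin (n + 1) → ℝ → X}
    (hG : ∀ k, Continuous (G k)) (hjoint : ∀ k : Fin n, G k.castSucc 1 = G k.succ 0) :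
    ∃ Γ : ℝ → X, Continuous Γ ∧ IsConcatenation Γ G := by
  obtain ⟨Γ, hΓ, hΓG⟩ := exists_continuous_fin_add hG hjoint
  refine ⟨fun t => Γ ((n + 1) * t), by fun_prop, fun k s hs => ?_⟩
  simp only [mul_div_cancel₀ (k + s : ℝ) (by positivity : (n + 1 : ℝ) ≠ 0)]
  exact hΓG k s hs

namespace IsConcatenation

variable {Γ : ℝ → X} {G : Fin (n + 1) → ℝ → X}

theorem apply_zero (h : IsConcatenation Γ G) : Γ 0 = G 0 0 := by
  simpa using h 0 0 (by simp)

theorem apply_one (h : IsConcatenation Γ G) : Γ 1 = G (Fin.last n) 1 := by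
  have h1 := h (Fin.last n) 1 (by simp)
  rwa [Fin.val_last, div_self (by positivity)] at h1

theorem image_Icc (h : IsConcatenation Γ G) :
    Γ '' Icc 0 1 = ⋃ k, G k '' Icc 0 1 := by
  ext x
  simp only [mem_image, mem_iUnion]
  constructor
  · rintro ⟨t, ht, rfl⟩
    obtain ⟨k, s, hs, rfl⟩ := exists_fin_add_div_of_mem_Icc n ht
    exact ⟨k, s, hs, (h k s hs).symm⟩
  · rintro ⟨k, s, hs, rfl⟩
    exact ⟨_, fin_add_div_mem_Icc k hs, h k s hs⟩

/-- For a self-similar curve, coincidence of two pieces at `s` and `t` only says that the curve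
itself coincides at `s` and `t`, but it does so at all scales. -/
theorem injOn_Ico (h : IsConcatenation Γ G) (hn : 0 < n)
    (hG : ∀ k l, ∀ s ∈ Ico (0 : ℝ) 1, ∀ t ∈ Ico (0 : ℝ) 1, G k s = G l t →
      k = l ∧ (s = t ∨ Γ s = Γ t)) : InjOn Γ (Ico 0 1) := by
  have hn1 : (1 : ℝ) < n + 1 := by exact_mod_cast Nat.succ_lt_succ hn
  have hclose : ∀ m : ℕ, ∀ s ∈ Ico (0 : ℝ) 1, ∀ t ∈ Ico (0 : ℝ) 1, Γ s = Γ t →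
      |s - t| ≤ (1 / (n + 1)) ^ m := by
    intro m
    induction m with
    | zero =>
      intro s hs t ht _
      rw [pow_zero, abs_le]
      constructor <;> linarith [hs.1, hs.2, ht.1, ht.2]
    | succ m ih =>
      intro t ht t' ht' heq
      obtain ⟨k, s, hs, rfl⟩ := exists_fin_add_div_of_mem_Ico n ht
      obtain ⟨l, s', hs', rfl⟩ := exists_fin_add_div_of_mem_Ico n ht'
      rw [h k s (Ico_subset_Icc_self hs), h l s' (Ico_subset_Icc_self hs')] at heq
      obtain ⟨rfl, hss'⟩ := hG k l s hs s' hs' heq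
      have hle : |s - s'| ≤ (1 / (n + 1)) ^ m := by
        rcases hss' with rfl | hΓ
        · rw [sub_self, abs_zero]
          positivity
        · exact ih s hs s' hs' hΓ
      calc |(k + s) / (n + 1) - (k + s') / (n + 1)| = |s - s'| * (1 / (n + 1)) := by
            rw [← sub_div, add_sub_add_left_eq_sub, abs_div,
              abs_of_pos (by positivity : (0 : ℝ) < n + 1), mul_one_div]
        _ ≤ (1 / (n + 1)) ^ m * (1 / (n + 1)) := by gcongr
        _ = (1 / (n + 1)) ^ (m + 1) := (pow_succ _ _).symm
  intro s hs t ht heq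
  have hlim : Filter.Tendsto (fun m : ℕ => (1 / (n + 1) : ℝ) ^ m) Filter.atTop (nhds 0) :=
    tendsto_pow_atTop_nhds_zero_of_lt_one (by positivity)
      (by rw [div_lt_one (by positivity)]; exact hn1)
  have hnonpos := ge_of_tendsto' hlim fun m => hclose m s hs t ht heq
  exact sub_eq_zero.1 (abs_nonpos_iff.1 hnonpos)

end IsConcatenation

/-- De Rham's construction of self-similar curves. The pieces `g k` may depend on the time `s` as
well, so that maps constant in the space variable produce connecting arcs. -/
theorem exists_continuous_isConcatenation_self [MetricSpace X] [CompleteSpace X] {K : NNReal}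
    {g : Fin (n + 1) → ℝ → X → X} {x y : X} (hxy : Joined x y)
    (hg : ∀ k, Continuous (Function.uncurry (g k))) (hK : K < 1)
    (hLip : ∀ k, ∀ s ∈ Icc (0 : ℝ) 1, LipschitzWith K (g k s)) (hstart : g 0 0 x = x)
    (hend : g (Fin.last n) 1 y = y) (hjoint : ∀ k : Fin n, g k.castSucc 1 y = g k.succ 0 x) :
    ∃ γ : ℝ → X, Continuous γ ∧ γ 0 = x ∧ γ 1 = y ∧
      IsConcatenation γ fun k s => g k s (γ s) := by
  let S : Set C(unitInterval, X) := {f | f 0 = x} ∩ {f | f 1 = y}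
  let ext (f : S) : ℝ → X := IccExtend zero_le_one f.1
  have hext (f : S) : Continuous (ext f) := f.1.continuous.Icc_extend'
  have hext0 (f : S) : ext f 0 = x := (IccExtend_left _ _).trans f.2.1
  have hext1 (f : S) : ext f 1 = y := (IccExtend_right _ _).trans f.2.2
  have hextI (f : S) (t : unitInterval) : ext f t = f.1 t := IccExtend_val _ _ t
  have hstep (f : S) : ∃ f' : S, IsConcatenation (ext f') fun k s => g k s (ext f s) := by
    obtain ⟨Γ, hΓ, hΓg⟩ := exists_continuous_isConcatenation
      (G := fun k s => g k s (ext f s)) (fun k => (hg k).comp (continuous_id.prodMk (hext f)))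
      (fun k => by simp only [hext0, hext1, hjoint])
    have h0 : Γ 0 = x := by rw [hΓg.apply_zero, hext0, hstart]
    have h1 : Γ 1 = y := by rw [hΓg.apply_one, hext1, hend]
    refine ⟨⟨⟨fun t => Γ t, by fun_prop⟩, h0, h1⟩, fun k s hs => ?_⟩
    rw [← hΓg k s hs]
    exact IccExtend_of_mem _ _ (fin_add_div_mem_Icc k hs)
  choose Φ hΦ using hstep
  have hcontr : ContractingWith K Φ := by
    refine ⟨hK, LipschitzWith.of_dist_le_mul fun f f' => ?_⟩
    rw [Subtype.dist_eq, ContinuousMap.dist_le (by positivity)]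
    intro t
    obtain ⟨k, s, hs, hts⟩ := exists_fin_add_div_of_mem_Icc n t.2
    rw [← hextI, ← hextI, hts, hΦ f k s hs, hΦ f' k s hs]
    refine ((hLip k s hs).dist_le_mul _ _).trans ?_
    gcongr
    exact ContinuousMap.dist_apply_le_dist (f := f.1) (g := f'.1) (projIcc 0 1 zero_le_one s)
  have hS : IsClosed S := by
    refine .inter (isClosed_eq ?_ continuous_const) (isClosed_eq ?_ continuous_const) <;>
      exact continuous_eval_const _
  have : CompleteSpace S := hS.completeSpace_coe
  have : Nonempty S := hxy.elim fun p => ⟨⟨p.toContinuousMap, p.source, p.target⟩⟩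
  let γ := ContractingWith.fixedPoint Φ hcontr
  have hγ : Φ γ = γ := hcontr.fixedPoint_isFixedPt
  exact ⟨ext γ, hext γ, hext0 γ, hext1 γ, fun k s hs => by rw [← hΦ γ k s hs, hγ]⟩

theorem exists_circle_embedding [TopologicalSpace X] {f : ℝ → X}
    (hf : ContinuousOn f (Icc 0 1)) (hloop : f 0 = f 1) (hinj : InjOn f (Ico 0 1)) :
    ∃ g : Circle → X, Continuous g ∧ Function.Injective g ∧ range g = f '' Icc 0 1 := by
  have : Fact ((0 : ℝ) < 1) := ⟨one_pos⟩
  let g : AddCircle (1 : ℝ) → X := AddCircle.liftIco 1 0 f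
  have hg {t : ℝ} (ht : t ∈ Ico (0 : ℝ) 1) : g t = f t :=
    AddCircle.liftIco_zero_coe_apply ht
  have hrep (z : AddCircle (1 : ℝ)) : ∃ t ∈ Ico (0 : ℝ) 1, (t : AddCircle (1 : ℝ)) = z := by
    have hz : z ∈ QuotientAddGroup.mk '' Ico (0 : ℝ) (0 + 1) :=
      AddCircle.coe_image_Ico_eq (1 : ℝ) 0 ▸ mem_univ z
    rwa [zero_add] at hz
  have hinj' : Function.Injective g := by
    intro z w hzw
    obtain ⟨s, hs, rfl⟩ := hrep z
    obtain ⟨t, ht, rfl⟩ := hrep w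
    rw [hinj hs ht (by rwa [hg hs, hg ht] at hzw)]
  have hrange : range g = f '' Icc 0 1 := by
    apply Subset.antisymm
    · rintro _ ⟨z, rfl⟩
      obtain ⟨t, ht, rfl⟩ := hrep z
      exact ⟨t, Ico_subset_Icc_self ht, (hg ht).symm⟩
    · rintro _ ⟨t, ht, rfl⟩
      rcases ht.2.lt_or_eq with h | rfl
      · exact ⟨t, hg ⟨ht.1, h⟩⟩
      · exact ⟨(0 : ℝ), (hg ⟨le_rfl, one_pos⟩).trans hloop⟩
  let e := (AddCircle.homeomorphCircle (one_ne_zero (α := ℝ))).symm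
  exact ⟨g ∘ e, (AddCircle.liftIco_zero_continuous hloop hf).comp e.continuous,
    hinj'.comp e.injective, by rw [e.surjective.range_comp, hrange]⟩

end Concatenation

/-! ### Dimension of self-similar sets -/

section IteratedFunctionSystem

variable {X ι : Type*}

theorem infDist_apply_le_mul_infDist {Y : Type*} [PseudoMetricSpace X] [PseudoMetricSpace Y]
    {f : X → Y} {K : NNReal} {S : Set X} {T : Set Y} (hf : LipschitzWith K f) (hS : S.Nonempty)
    (hST : MapsTo f S T) (x : X) : infDist (f x) T ≤ K * infDist x S := by
  have : Nonempty S := hS.to_subtype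
  rw [infDist_eq_iInf (s := S), Real.mul_iInf_of_nonneg K.coe_nonneg]
  exact le_ciInf fun y => (infDist_le_dist_of_mem (hST y.2)).trans (hf.dist_le_mul x y)

theorem subset_of_subset_union_iUnion_image [PseudoMetricSpace X] {φ : ι → X → X} {K : NNReal}
    {A S : Set X} (hK : K < 1) (hφ : ∀ j, LipschitzWith K (φ j)) (hSc : IsClosed S)
    (hSne : S.Nonempty) (hS : ∀ j, MapsTo (φ j) S S) (hA : Bornology.IsBounded A)
    (hAS : A ⊆ S ∪ ⋃ j, φ j '' A) : A ⊆ S := by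
  obtain ⟨x₀, hx₀⟩ := hSne
  obtain ⟨R, hR, hAR⟩ := hA.subset_ball_lt 0 x₀
  have hdist (n : ℕ) : ∀ x ∈ A, infDist x S ≤ K ^ n * R := by
    induction n with
    | zero =>
      intro x hx
      rw [pow_zero, one_mul]
      exact (infDist_le_dist_of_mem hx₀).trans (mem_ball.1 (hAR hx)).le
    | succ n ih =>
      intro x hx
      rcases hAS hx with hxS | hxA
      · rw [infDist_zero_of_mem hxS]
        positivity
      · obtain ⟨j, y, hy, rfl⟩ := mem_iUnion.1 hxA
        calc infDist (φ j y) S ≤ K * infDist y S :=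
            infDist_apply_le_mul_infDist (hφ j) ⟨x₀, hx₀⟩ (hS j) y
          _ ≤ K * (K ^ n * R) := by gcongr; exact ih y hy
          _ = K ^ (n + 1) * R := by ring
  have hlim : Filter.Tendsto (fun n : ℕ => (K : ℝ) ^ n * R) Filter.atTop (nhds 0) := by
    simpa using (tendsto_pow_atTop_nhds_zero_of_lt_one K.2 hK).mul_const R
  intro x hx
  refine (hSc.mem_iff_infDist_zero ⟨x₀, hx₀⟩).2 (le_antisymm ?_ infDist_nonneg)
  exact ge_of_tendsto' hlim fun n => hdist n x hx

/-- The composition `φ (w 0) ∘ ⋯ ∘ φ (w (n - 1))` of maps of an iterated function system along the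
first `n` letters of the infinite word `w`. -/
def wordMap (φ : ι → X → X) (w : ℕ → ι) : ℕ → X → X
  | 0 => id
  | n + 1 => wordMap φ w n ∘ φ (w n)

theorem wordMap_congr {φ : ι → X → X} {v w : ℕ → ι} {n : ℕ} (h : ∀ m < n, v m = w m) :
    wordMap φ v n = wordMap φ w n := by
  induction n with
  | zero => rfl
  | succ n ih =>
    rw [wordMap, wordMap, ih fun m hm => h m (hm.trans n.lt_succ_self), h n n.lt_succ_self]

theorem pow_mul_dist_le_dist_wordMap [PseudoMetricSpace X] {φ : ι → X → X} {A : Set X} {r : ℝ}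
    (hr : 0 ≤ r) (hmaps : ∀ j, MapsTo (φ j) A A)
    (hexp : ∀ j, ∀ x ∈ A, ∀ y ∈ A, r * dist x y ≤ dist (φ j x) (φ j y)) (w : ℕ → ι) (n : ℕ)
    {x y : X} (hx : x ∈ A) (hy : y ∈ A) :
    r ^ n * dist x y ≤ dist (wordMap φ w n x) (wordMap φ w n y) := by
  induction n generalizing x y with
  | zero => simp [wordMap]
  | succ n ih =>
    calc r ^ (n + 1) * dist x y = r ^ n * (r * dist x y) := by ring
      _ ≤ r ^ n * dist (φ (w n) x) (φ (w n) y) := by gcongr; exact hexp _ x hx y hy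
      _ ≤ _ := ih (hmaps _ hx) (hmaps _ hy)

theorem exists_forall_mem_wordMap_image [TopologicalSpace X] [T2Space X] {φ : ι → X → X}
    {A : Set X} (hA : IsCompact A) (hAne : A.Nonempty) (hφ : ∀ j, Continuous (φ j))
    (hmaps : ∀ j, MapsTo (φ j) A A) (w : ℕ → ι) : ∃ x, ∀ n, x ∈ wordMap φ w n '' A := by
  have hcont (n : ℕ) : Continuous (wordMap φ w n) := by
    induction n with
    | zero => exact continuous_id
    | succ n ih => exact ih.comp (hφ _)
  have hcompact (n : ℕ) : IsCompact (wordMap φ w n '' A) := hA.image (hcont n)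
  obtain ⟨x, hx⟩ := IsCompact.nonempty_iInter_of_sequence_nonempty_isCompact_isClosed
    (fun n => wordMap φ w n '' A)
    (fun n => by rw [wordMap, image_comp]; exact image_mono (hmaps _).image_subset)
    (fun n => hAne.image _) (hcompact 0) (fun n => (hcompact n).isClosed)
  exact ⟨x, mem_iInter.1 hx⟩

theorem exists_pos_le_dist_of_pairwise_disjoint [MetricSpace X] [Finite ι] {A : ι → Set X}
    (hA : ∀ j, IsCompact (A j)) (hdisj : Pairwise fun j k => Disjoint (A j) (A k)) :
    ∃ δ : ℝ, 0 < δ ∧ ∀ j k, j ≠ k → ∀ x ∈ A j, ∀ y ∈ A k, δ ≤ dist x y := by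
  have hpair (p : ι × ι) : ∃ δ : ℝ, 0 < δ ∧
      (p.1 ≠ p.2 → ∀ x ∈ A p.1, ∀ y ∈ A p.2, δ ≤ dist x y) := by
    by_cases hp : p.1 = p.2
    · exact ⟨1, one_pos, fun h => absurd hp h⟩
    · obtain ⟨δ, hδ, hsep⟩ :=
        exists_pos_forall_lt_edist (hA p.1) (hA p.2).isClosed (hdisj hp)
      refine ⟨δ, hδ, fun _ x hx y hy => ?_⟩
      have h := hsep x hx y hy
      rw [edist_nndist, ENNReal.coe_lt_coe] at h
      exact h.le
  choose δ hδ hsep using hpair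
  obtain ⟨δ₀, hδ₀, hle⟩ : ∃ δ₀ : ℝ, 0 < δ₀ ∧ ∀ p, δ₀ ≤ δ p := by
    cases isEmpty_or_nonempty (ι × ι) with
    | inl h => exact ⟨1, one_pos, fun p => h.elim p⟩
    | inr h =>
      obtain ⟨p, hp⟩ := Finite.exists_min δ
      exact ⟨δ p, hδ p, hp⟩
  exact ⟨δ₀, hδ₀, fun j k hjk x hx y hy => (hle (j, k)).trans (hsep (j, k) hjk x hx y hy)⟩

section Coding

variable [MetricSpace X] {N : ℕ} {π : (ℕ → Fin N) → X} {δ r : ℝ}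

theorem injective_of_separated (hδ : 0 < δ) (hr : 0 < r)
    (hsep : ∀ (n : ℕ) (v w : ℕ → Fin N), (∀ m < n, v m = w m) → v n ≠ w n →
      δ * r ^ n ≤ dist (π v) (π w)) : Function.Injective π := by
  intro v w hvw
  by_contra hne
  have h := hsep _ v w (fun _ => PiNat.apply_eq_of_lt_firstDiff) (PiNat.apply_firstDiff_ne hne)
  rw [hvw, dist_self] at h
  exact h.not_gt (by positivity)

theorem dist_ofDigits_le_rpow_of_separated (hδ : 0 < δ) (hr : 0 < r)
    (hsep : ∀ (n : ℕ) (v w : ℕ → Fin N), (∀ m < n, v m = w m) → v n ≠ w n →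
      δ * r ^ n ≤ dist (π v) (π w)) {s : ℝ} (hs : 0 < s) (hNr : 1 / N ≤ r ^ s)
    (v w : ℕ → Fin N) :
    dist (Real.ofDigits v) (Real.ofDigits w) ≤ (δ⁻¹ * dist (π v) (π w)) ^ s := by
  rcases eq_or_ne v w with rfl | hvw
  · rw [dist_self]
    positivity
  have hlt : ∀ m < PiNat.firstDiff v w, v m = w m := fun _ => PiNat.apply_eq_of_lt_firstDiff
  set n := PiNat.firstDiff v w
  calc dist (Real.ofDigits v) (Real.ofDigits w) ≤ (1 / N : ℝ) ^ n := by
        rw [Real.dist_eq, one_div, inv_pow]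
        exact_mod_cast Real.abs_ofDigits_sub_ofDigits_le hlt
    _ ≤ (r ^ s) ^ n := by gcongr
    _ = (r ^ n) ^ s := by
      rw [← Real.rpow_natCast, ← Real.rpow_natCast, ← Real.rpow_mul hr.le,
        ← Real.rpow_mul hr.le, mul_comm]
    _ ≤ (δ⁻¹ * dist (π v) (π w)) ^ s := by
      gcongr
      rw [le_inv_mul_iff₀ hδ]
      exact hsep n v w hlt (PiNat.apply_firstDiff_ne hvw)

/-- Sending a coded point to the real number with the same digits is Hölder of exponent `s` and
covers `[0, 1]`. -/
theorem ofReal_le_dimH_range_of_separated (hN : 1 < N) (hδ : 0 < δ) (hr : 0 < r)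
    (hsep : ∀ (n : ℕ) (v w : ℕ → Fin N), (∀ m < n, v m = w m) → v n ≠ w n →
      δ * r ^ n ≤ dist (π v) (π w)) {s : ℝ} (hs : 0 < s) (hNr : 1 / N ≤ r ^ s) :
    ENNReal.ofReal s ≤ dimH (range π) := by
  have : NeZero N := ⟨by omega⟩
  let g (x : X) : ℝ := Real.ofDigits (Function.invFun π x)
  have hg (w : ℕ → Fin N) : g (π w) = Real.ofDigits w := by
    simp only [g, Function.leftInverse_invFun (injective_of_separated hδ hr hsep) w]
  have hHolder : HolderOnWith (δ⁻¹ ^ s).toNNReal s.toNNReal g (range π) := by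
    rintro _ ⟨v, rfl⟩ _ ⟨w, rfl⟩
    rw [hg, hg, edist_dist, edist_dist, Real.coe_toNNReal _ hs.le,
      ENNReal.ofReal_rpow_of_nonneg dist_nonneg hs.le, ← ENNReal.ofReal.eq_1,
      ← ENNReal.ofReal_mul (by positivity), ← Real.mul_rpow (by positivity) dist_nonneg]
    exact ENNReal.ofReal_le_ofReal (dist_ofDigits_le_rpow_of_separated hδ hr hsep hs hNr v w)
  have himage : Icc (0 : ℝ) 1 ⊆ g '' range π := by
    intro x hx
    obtain ⟨w, -, hw⟩ := Real.ofDigits_SurjOn hN hx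
    exact ⟨π w, mem_range_self w, (hg w).trans hw⟩
  have hdim : dimH (g '' range π) = 1 := by
    have hnhds : g '' range π ∈ nhds (1 / 2 : ℝ) :=
      Filter.mem_of_superset (Icc_mem_nhds (by norm_num) (by norm_num)) himage
    rw [Real.dimH_of_mem_nhds hnhds, Module.finrank_self, Nat.cast_one]
  have hle := hdim ▸ hHolder.dimH_image_le (Real.toNNReal_pos.2 hs)
  have hs' : (s.toNNReal : ENNReal) ≠ 0 := by simpa using hs
  rwa [ENNReal.le_div_iff_mul_le (.inl hs') (.inl ENNReal.coe_ne_top), one_mul] at hle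

end Coding

theorem ofReal_le_dimH_of_strong_separation [MetricSpace X] {N : ℕ} (hN : 1 < N)
    {φ : Fin N → X → X} {A : Set X} {r s : ℝ} (hA : IsCompact A) (hAne : A.Nonempty)
    (hφ : ∀ j, Continuous (φ j)) (hmaps : ∀ j, MapsTo (φ j) A A) (hr : 0 < r) (hs : 0 < s)
    (hexp : ∀ j, ∀ x ∈ A, ∀ y ∈ A, r * dist x y ≤ dist (φ j x) (φ j y))
    (hdisj : Pairwise fun j k => Disjoint (φ j '' A) (φ k '' A)) (hNr : 1 / N ≤ r ^ s) :
    ENNReal.ofReal s ≤ dimH A := by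
  obtain ⟨δ, hδ, hsep⟩ :=
    exists_pos_le_dist_of_pairwise_disjoint (fun j => hA.image (hφ j)) hdisj
  choose π hπ using exists_forall_mem_wordMap_image hA hAne hφ hmaps
  have hrange : range π ⊆ A := by
    rintro _ ⟨w, rfl⟩
    simpa [wordMap] using hπ w 0
  refine le_trans ?_ (dimH_mono hrange)
  refine ofReal_le_dimH_range_of_separated hN hδ hr (fun n v w hvw hne => ?_) hs hNr
  obtain ⟨x, hx, hxv⟩ := hπ v (n + 1)
  obtain ⟨y, hy, hyw⟩ := hπ w (n + 1)
  rw [← hxv, ← hyw, wordMap, wordMap, wordMap_congr hvw]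
  calc δ * r ^ n ≤ r ^ n * dist (φ (v n) x) (φ (w n) y) := by
        rw [mul_comm]
        gcongr
        exact hsep _ _ hne _ (mem_image_of_mem _ hx) _ (mem_image_of_mem _ hy)
    _ ≤ _ := pow_mul_dist_le_dist_wordMap hr.le hmaps hexp w n (hmaps _ hx) (hmaps _ hy)

end IteratedFunctionSystem

theorem one_le_dimH_of_isPreconnected {X : Type*} [MetricSpace X] {A : Set X}
    (hA : IsPreconnected A) (hnt : A.Nontrivial) : 1 ≤ dimH A := by
  obtain ⟨x, hx, y, hy, hxy⟩ := hnt
  have hsub : Icc 0 (dist y x) ⊆ (dist · x) '' A := by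
    have h := hA.intermediate_value hx hy (f := (dist · x)) (by fun_prop)
    rwa [dist_self] at h
  have hpos := dist_pos.2 hxy.symm
  calc (1 : ENNReal) = dimH (Icc 0 (dist y x)) := by
        rw [Real.dimH_of_mem_nhds (Icc_mem_nhds (half_pos hpos) (half_lt_self hpos)),
          Module.finrank_self, Nat.cast_one]
    _ ≤ dimH ((dist · x) '' A) := dimH_mono hsub
    _ ≤ dimH A := (LipschitzWith.dist_left x).dimH_image_le A

/-! ### Carrots -/

theorem lipschitzOnWith_Icc_of_Icc_of_Icc {X : Type*} [PseudoMetricSpace X] {f : ℝ → X}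
    {K : NNReal} {a b c : ℝ} (hab : LipschitzOnWith K f (Icc a b))
    (hbc : LipschitzOnWith K f (Icc b c)) : LipschitzOnWith K f (Icc a c) := by
  refine LipschitzOnWith.of_dist_le_mul fun s hs t ht => ?_
  wlog hst : s ≤ t generalizing s t
  · rw [dist_comm, dist_comm s]
    exact this t ht s hs (le_of_not_ge hst)
  rcases le_total t b with htb | hbt
  · exact hab.dist_le_mul s ⟨hs.1, hst.trans htb⟩ t ⟨ht.1, htb⟩
  rcases le_total b s with hbs | hsb
  · exact hbc.dist_le_mul s ⟨hbs, hs.2⟩ t ⟨hbt, ht.2⟩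
  calc dist (f s) (f t) ≤ dist (f s) (f b) + dist (f b) (f t) := dist_triangle _ _ _
    _ ≤ K * dist s b + K * dist b t :=
      add_le_add (hab.dist_le_mul s ⟨hs.1, hsb⟩ b ⟨hs.1.trans hsb, le_rfl⟩)
        (hbc.dist_le_mul b ⟨le_rfl, hbt.trans ht.2⟩ t ⟨hbt, ht.2⟩)
    _ = K * dist s t := by
      rw [← mul_add, Real.dist_eq, Real.dist_eq, Real.dist_eq, abs_of_nonpos (sub_nonpos.2 hsb),
        abs_of_nonpos (sub_nonpos.2 hbt), abs_of_nonpos (sub_nonpos.2 hst)]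
      ring

theorem lipschitzWith_lineMap_div_dist {E : Type*} [SeminormedAddCommGroup E] [NormedSpace ℝ E]
    (x y : E) : LipschitzWith 1 fun t : ℝ => AffineMap.lineMap (k := ℝ) x y (t / dist x y) := by
  refine LipschitzWith.of_dist_le_mul fun s t => ?_
  rw [dist_lineMap_lineMap, Real.dist_eq, ← sub_div, abs_div, abs_of_nonneg dist_nonneg,
    Real.dist_eq, NNReal.coe_one, one_mul, div_mul_eq_mul_div, mul_div_assoc]
  exact mul_le_of_le_one_right (abs_nonneg _) (div_self_le_one _)

theorem ball_lineMap_subset {E : Type*} [SeminormedAddCommGroup E] [NormedSpace ℝ E] {C : Set E}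
    (hC : Convex ℝ C) {x y : E} {a b s : ℝ} (hx : x ∈ C) (hy : y ∈ C) (ha : 0 ≤ a) (hb : 0 ≤ b)
    (hxa : ball x a ⊆ C) (hyb : ball y b ⊆ C) (hs : s ∈ Icc (0 : ℝ) 1) :
    ball (AffineMap.lineMap x y s) ((1 - s) * a + s * b) ⊆ C := by
  intro z hz
  rw [mem_ball, dist_eq_norm, AffineMap.lineMap_apply_module] at hz
  set ρ := (1 - s) * a + s * b
  set h := z - ((1 - s) • x + s • y) with hzh
  have hρ : 0 < ρ := (norm_nonneg _).trans_lt hz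
  have hshift {c : E} {σ : ℝ} (hc : c ∈ C) (hσ : 0 ≤ σ) (hcσ : ball c σ ⊆ C) :
      c + (σ / ρ) • h ∈ C := by
    rcases hσ.eq_or_lt with rfl | hσ
    · simpa using hc
    · refine hcσ ?_
      rw [mem_ball, dist_self_add_left, norm_smul, Real.norm_of_nonneg (by positivity),
        div_mul_eq_mul_div, div_lt_iff₀ hρ]
      gcongr
  have hcomb := hC (hshift hx ha hxa) (hshift hy hb hyb) (sub_nonneg.2 hs.2) hs.1
    (sub_add_cancel 1 s)
  convert hcomb using 1
  have hone : (1 - s) * (a / ρ) + s * (b / ρ) = 1 := by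
    rw [← mul_div_assoc, ← mul_div_assoc, ← add_div, div_self hρ.ne']
  rw [smul_add, smul_add, smul_smul, smul_smul, add_add_add_comm, ← add_smul, hone, one_smul, hzh,
    add_sub_cancel]

/-- `x` can be joined to `y` by a curve of length at most `τ` around which the carrot-shaped
region of slope `J` with tip `x` lies in `O`, as in the definition of a `J`-John domain. -/
def CarrotJoined {X : Type*} [PseudoMetricSpace X] (O : Set X) (J : ℝ) (x y : X) (τ : ℝ) : Prop :=
  0 ≤ τ ∧ ∃ γ : ℝ → X, LipschitzOnWith 1 γ (Icc 0 τ) ∧ γ 0 = x ∧ γ τ = y ∧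
    ∀ t ∈ Icc 0 τ, γ t ∈ O ∧ ball (γ t) (J * t) ⊆ O

namespace CarrotJoined

section PseudoMetricSpace

variable {X Y : Type*} [PseudoMetricSpace X] [PseudoMetricSpace Y] {O O' : Set X} {J τ : ℝ}
  {x y z : X}

theorem refl (J : ℝ) (hx : x ∈ O) : CarrotJoined O J x x 0 := by
  refine ⟨le_rfl, fun _ => x, (LipschitzWith.const' x).lipschitzOnWith, rfl, rfl, fun t ht => ?_⟩
  obtain rfl : t = 0 := le_antisymm ht.2 ht.1
  exact ⟨hx, by simp⟩

theorem mono (h : CarrotJoined O J x y τ) (hO : O ⊆ O') : CarrotJoined O' J x y τ := by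
  obtain ⟨hτ, γ, hγ, hγ0, hγτ, hcarrot⟩ := h
  exact ⟨hτ, γ, hγ, hγ0, hγτ, fun t ht => (hcarrot t ht).imp (@hO _) (·.trans hO)⟩

theorem image_of_dist_eq_mul (h : CarrotJoined O J x y τ) {f : X → Y} {r : ℝ} (hr : 0 < r)
    (hf : ∀ x y, dist (f x) (f y) = r * dist x y) (hsurj : Function.Surjective f) :
    CarrotJoined (f '' O) J (f x) (f y) (r * τ) := by
  obtain ⟨hτ, γ, hγ, rfl, rfl, hcarrot⟩ := h
  have hdiv {t : ℝ} (ht : t ∈ Icc 0 (r * τ)) : t / r ∈ Icc 0 τ :=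
    ⟨div_nonneg ht.1 hr.le, (div_le_iff₀' hr).2 ht.2⟩
  refine ⟨by positivity, fun t => f (γ (t / r)), ?_, by simp, by simp [hr.ne'], fun t ht => ?_⟩
  · refine LipschitzOnWith.of_dist_le_mul fun s hs t ht => ?_
    calc dist (f (γ (s / r))) (f (γ (t / r))) = r * dist (γ (s / r)) (γ (t / r)) := hf _ _
      _ ≤ r * dist (s / r) (t / r) := by
        gcongr
        simpa using hγ.dist_le_mul _ (hdiv hs) _ (hdiv ht)
      _ = (1 : NNReal) * dist s t := by
        rw [Real.dist_eq, Real.dist_eq, ← sub_div, abs_div, abs_of_pos hr, mul_div_cancel₀ _ hr.ne',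
          NNReal.coe_one, one_mul]
  · obtain ⟨hmem, hball⟩ := hcarrot _ (hdiv ht)
    refine ⟨mem_image_of_mem f hmem, fun w hw => ?_⟩
    obtain ⟨w, rfl⟩ := hsurj w
    refine mem_image_of_mem f (hball ?_)
    rw [mem_ball, hf] at hw
    rwa [mem_ball, ← mul_div_assoc, lt_div_iff₀' hr]

theorem trans_curve (h : CarrotJoined O J x y τ) {η : ℝ → X} {ℓ : ℝ} (hℓ : 0 ≤ ℓ)
    (hη : LipschitzOnWith 1 η (Icc 0 ℓ)) (hη0 : η 0 = y) (hηℓ : η ℓ = z)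
    (hball : ∀ t ∈ Icc 0 ℓ, η t ∈ O ∧ ball (η t) (J * (τ + t)) ⊆ O) :
    CarrotJoined O J x z (τ + ℓ) := by
  obtain ⟨hτ, γ, hγ, hγ0, hγτ, hcarrot⟩ := h
  let f (t : ℝ) : X := if t ≤ τ then γ t else η (t - τ)
  have hfγ {t : ℝ} (ht : t ≤ τ) : f t = γ t := if_pos ht
  have hfη {t : ℝ} (ht : τ ≤ t) : f t = η (t - τ) := by
    rcases ht.eq_or_lt with rfl | ht
    · rw [hfγ le_rfl, sub_self, hγτ, hη0]
    · exact if_neg ht.not_ge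
  have hshift {t : ℝ} (ht : t ∈ Icc τ (τ + ℓ)) : t - τ ∈ Icc 0 ℓ :=
    ⟨sub_nonneg.2 ht.1, sub_le_iff_le_add'.2 ht.2⟩
  have hτℓ : τ ≤ τ + ℓ := le_add_of_nonneg_right hℓ
  refine ⟨hτ.trans hτℓ, f, lipschitzOnWith_Icc_of_Icc_of_Icc (b := τ) ?_ ?_, ?_, ?_, ?_⟩
  · intro s hs t ht
    rw [hfγ hs.2, hfγ ht.2]
    exact hγ hs ht
  · intro s hs t ht
    rw [hfη hs.1, hfη ht.1, ← edist_sub_right s t τ]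
    exact hη (hshift hs) (hshift ht)
  · rw [hfγ hτ, hγ0]
  · rw [hfη hτℓ, add_sub_cancel_left, hηℓ]
  · intro t ht
    rcases le_total t τ with htτ | htτ
    · rw [hfγ htτ]
      exact hcarrot t ⟨ht.1, htτ⟩
    · rw [hfη htτ]
      simpa using hball _ (hshift ⟨htτ, ht.2⟩)

end PseudoMetricSpace

section NormedSpace

variable {E : Type*} [NormedAddCommGroup E] [NormedSpace ℝ E] {O C : Set E} {J τ : ℝ}
  {x y z : E}

theorem trans_segment (h : CarrotJoined O J x y τ) (hJ : 0 ≤ J) (hC : Convex ℝ C) (hCO : C ⊆ O)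
    (hy : y ∈ C) (hz : z ∈ C) (hyC : ball y (J * τ) ⊆ C)
    (hzC : ball z (J * (τ + dist y z)) ⊆ C) : CarrotJoined O J x z (τ + dist y z) := by
  have hτ : 0 ≤ τ := h.1
  refine h.trans_curve dist_nonneg (lipschitzWith_lineMap_div_dist y z).lipschitzOnWith
    (by simp) ?_ fun t ht => ?_
  · rcases eq_or_ne y z with rfl | hyz
    · simp
    · rw [div_self (dist_ne_zero.2 hyz), AffineMap.lineMap_apply_one]
  have hs : t / dist y z ∈ Icc (0 : ℝ) 1 :=
    ⟨div_nonneg ht.1 dist_nonneg, div_le_one_of_le₀ ht.2 dist_nonneg⟩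
  refine ⟨hCO (hC.lineMap_mem hy hz hs), Subset.trans ?_
    ((ball_lineMap_subset hC hy hz (by positivity) (by positivity) hyC hzC hs).trans hCO)⟩
  have ht' : t / dist y z * dist y z = t := by
    rcases eq_or_ne y z with rfl | hyz
    · simp [le_antisymm (dist_self y ▸ ht.2) ht.1]
    · exact div_mul_cancel₀ _ (dist_ne_zero.2 hyz)
  exact ball_subset_ball (by linear_combination (-J) * ht')

theorem of_convex (hJ : 0 ≤ J) (hC : Convex ℝ C) (hx : x ∈ C) (hy : y ∈ C)
    (hyC : ball y (J * dist x y) ⊆ C) : CarrotJoined C J x y (dist x y) := by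
  simpa using (refl J hx).trans_segment hJ hC Subset.rfl hx hy (by simp) (by simpa using hyC)

end NormedSpace

end CarrotJoined

theorem isConnected_of_forall_carrotJoined {X : Type*} [PseudoMetricSpace X] {O : Set X} {J : ℝ}
    {c : X} (hc : c ∈ O) (h : ∀ x ∈ O, ∃ τ, CarrotJoined O J x c τ) : IsConnected O := by
  refine ⟨⟨c, hc⟩, isPreconnected_of_forall c fun x hx => ?_⟩
  obtain ⟨τ, hτ, γ, hγ, rfl, rfl, hcarrot⟩ := h x hx
  exact ⟨γ '' Icc 0 τ, image_subset_iff.2 fun t ht => (hcarrot t ht).1,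
    mem_image_of_mem γ (right_mem_Icc.2 hτ), mem_image_of_mem γ (left_mem_Icc.2 hτ),
    isPreconnected_Icc.image γ hγ.continuousOn⟩

theorem isJohnDomain_of_forall_carrotJoined {Ω : Set Plane} {J : ℝ} {c : Plane} (hΩ : IsOpen Ω)
    (hne : (frontier Ω).Nonempty) (hc : c ∈ Ω) (h : ∀ x ∈ Ω, ∃ τ, CarrotJoined Ω J x c τ) :
    IsJohnDomain Ω J := by
  refine ⟨c, hc, fun x hx => ?_⟩
  obtain ⟨τ, hτ, γ, hγ, hγ0, hγτ, hcarrot⟩ := h x hx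
  refine ⟨τ, γ, hτ, hγ, hγ0, hγτ, fun t ht => ⟨(hcarrot t ht).1, ?_⟩⟩
  refine (le_infDist hne).2 fun y hy => not_lt.1 fun hlt => ?_
  exact (hΩ.frontier_eq ▸ hy).2 ((hcarrot t ht).2 (mem_ball'.2 hlt))

/-! ### The domain -/

theorem continuous_complex_mk {X : Type*} [TopologicalSpace X] {f g : X → ℝ}
    (hf : Continuous f) (hg : Continuous g) : Continuous fun x => (⟨f x, g x⟩ : ℂ) :=
  Complex.equivRealProdCLM.symm.continuous.comp (hf.prodMk hg)

theorem convex_reProdIm {s t : Set ℝ} (hs : Convex ℝ s) (ht : Convex ℝ t) :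
    Convex ℝ (s ×ℂ t) :=
  (hs.linear_preimage Complex.reLm).inter (ht.linear_preimage Complex.imLm)

theorem ball_subset_Ioo_reProdIm (c : ℂ) (ρ : ℝ) :
    ball c ρ ⊆ Ioo (c.re - ρ) (c.re + ρ) ×ℂ Ioo (c.im - ρ) (c.im + ρ) := by
  intro z hz
  rw [mem_ball, Complex.dist_eq] at hz
  have hre := abs_lt.1 ((Complex.abs_re_le_norm (z - c)).trans_lt hz)
  have him := abs_lt.1 ((Complex.abs_im_le_norm (z - c)).trans_lt hz)
  rw [Complex.sub_re] at hre
  rw [Complex.sub_im] at him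
  exact ⟨⟨by linarith, by linarith⟩, by linarith, by linarith⟩

theorem dist_le_mul_sqrt_of_abs_le {z w : ℂ} {k a b : ℝ} (hk : 0 ≤ k)
    (hre : |z.re - w.re| ≤ k * a) (him : |z.im - w.im| ≤ k * b) :
    dist z w ≤ k * √(a ^ 2 + b ^ 2) := by
  rw [Complex.dist_eq_re_im, ← Real.sqrt_sq hk, ← Real.sqrt_mul (sq_nonneg k)]
  refine Real.sqrt_le_sqrt ?_
  have hre' := sq_le_sq' (neg_le_of_abs_le hre) (le_of_abs_le hre)
  have him' := sq_le_sq' (neg_le_of_abs_le him) (le_of_abs_le him)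
  linarith

theorem mul_mem_Ico {a s : ℝ} (ha : 0 < a) (hs : s ∈ Ico (0 : ℝ) 1) : a * s ∈ Ico 0 a :=
  ⟨mul_nonneg ha.le hs.1, mul_lt_of_lt_one_right ha hs.2⟩

/-- The shape of one generation of the construction over the door `[0, 1]`: four copies scaled by
`r`, kept apart by gaps of width `ε`, around a shaft of width `b`. -/
structure HatParams where
  r : ℝ
  ε : ℝ
  b : ℝ
  r_pos : 0 < r
  ε_pos : 0 < ε
  b_pos : 0 < b
  add_eq_one : 2 * r + 4 * ε + b = 1

namespace HatParams

variable (P : HatParams) {z : ℂ}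

theorem r_lt_half : P.r < 1 / 2 := by
  linarith [P.ε_pos, P.b_pos, P.add_eq_one]

theorem b_lt_one : P.b < 1 := by
  linarith [P.ε_pos, P.r_pos, P.add_eq_one]

/-- The four similarities of ratio `r` carrying the door `[0, 1]` to the doors of the next
generation: two in the ceiling of the strip and two in the side walls of the shaft. -/
def sim (j : Fin 4) : ℂ ≃ₜ ℂ :=
  (Homeomorph.mulLeft₀ (P.r * ![1, Complex.I, -Complex.I, 1] j : ℂ) <|
      mul_ne_zero (Complex.ofReal_ne_zero.2 P.r_pos.ne') (by fin_cases j <;> simp)).trans <|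
    Homeomorph.addRight (![⟨P.ε, P.ε⟩, ⟨P.r + 2 * P.ε, P.ε⟩, ⟨1 - (P.r + 2 * P.ε), P.r + P.ε⟩,
      ⟨1 - (P.r + P.ε), P.ε⟩] j)

theorem sim_zero (z : ℂ) : P.sim 0 z = ⟨P.r * z.re + P.ε, P.r * z.im + P.ε⟩ := by
  apply Complex.ext <;> simp [sim]

theorem sim_one (z : ℂ) :
    P.sim 1 z = ⟨P.r + 2 * P.ε - P.r * z.im, P.r * z.re + P.ε⟩ := by
  apply Complex.ext <;> simp [sim, sub_eq_neg_add]

theorem sim_two (z : ℂ) :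
    P.sim 2 z = ⟨1 - (P.r + 2 * P.ε) + P.r * z.im, P.r + P.ε - P.r * z.re⟩ := by
  apply Complex.ext <;> simp [sim, add_comm, ← sub_eq_neg_add]

theorem sim_three (z : ℂ) :
    P.sim 3 z = ⟨1 - (P.r + P.ε) + P.r * z.re, P.r * z.im + P.ε⟩ := by
  apply Complex.ext <;> simp [sim, add_comm]

theorem dist_sim (j : Fin 4) (z w : ℂ) : dist (P.sim j z) (P.sim j w) = P.r * dist z w := by
  have hrot : ‖(![1, Complex.I, -Complex.I, 1] j : ℂ)‖ = 1 := by fin_cases j <;> simp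
  simp [sim, dist_eq_norm, ← mul_sub, hrot, abs_of_pos P.r_pos]

/-- The closed right isosceles triangle with hypotenuse `[0, 1]`; it contains the fractal arc. -/
def triangle : Set ℂ := {z | 0 ≤ z.im ∧ z.im ≤ z.re ∧ z.im ≤ 1 - z.re}

/-- The part of the room lying along the door; its ceiling carries the copies `0` and `3`. -/
def strip : Set ℂ := (Ioo 0 1 ×ℂ Ioo (-P.b) P.ε) ∩ {z | z.im < z.re ∧ z.im < 1 - z.re}

/-- The part of the room rising between the copies `1` and `2`. -/
def shaft : Set ℂ := Ioo (P.r + 2 * P.ε) (1 - (P.r + 2 * P.ε)) ×ℂ Ioo (-P.b) (P.r + P.ε)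

/-- The part of the strip below the door. -/
def porch : Set ℂ := Ioo 0 1 ×ℂ Ioo (-P.b) 0

/-- The part of the domain added through the door `[0, 1]` by one generation, including a
neighbourhood of depth `b` below the door. -/
def room : Set ℂ := P.strip ∪ P.shaft

/-- The convex part of the room into which the `j`-th copy opens. -/
def hall (j : Fin 4) : Set ℂ := ![P.strip, P.shaft, P.shaft, P.strip] j

/-- Membership in the union of the images of the room under all compositions of similarities. -/
inductive MemTower : ℂ → Prop
  | room (z : ℂ) (hz : z ∈ P.room) : MemTower z
  | sim (j : Fin 4) (z : ℂ) (hz : MemTower z) : MemTower (P.sim j z)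

/-- The rooms of all generations. -/
def tower : Set ℂ := {z | P.MemTower z}

/-- The open square below the door. -/
def square : Set ℂ := Ioo 0 1 ×ℂ Ioo (-1) 0

/-- The square with the tower of rooms put on top of it: the domain of the theorem. -/
def domain : Set ℂ := P.tower ∪ square

theorem isOpen_strip : IsOpen P.strip :=
  (isOpen_Ioo.reProdIm isOpen_Ioo).inter <|
    (isOpen_lt (g := fun z : ℂ => z.re) (by fun_prop) (by fun_prop)).inter
      (isOpen_lt (g := fun z : ℂ => 1 - z.re) (by fun_prop) (by fun_prop))

theorem isOpen_room : IsOpen P.room := P.isOpen_strip.union (isOpen_Ioo.reProdIm isOpen_Ioo)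

theorem isClosed_triangle : IsClosed triangle :=
  (isClosed_le (g := fun z : ℂ => z.im) (by fun_prop) (by fun_prop)).inter <|
    (isClosed_le (g := fun z : ℂ => z.re) (by fun_prop) (by fun_prop)).inter
      (isClosed_le (g := fun z : ℂ => 1 - z.re) (by fun_prop) (by fun_prop))

theorem isOpen_square : IsOpen square := isOpen_Ioo.reProdIm isOpen_Ioo

theorem room_subset_tower : P.room ⊆ P.tower := fun z hz => .room z hz

theorem mapsTo_sim_tower (j : Fin 4) : MapsTo (P.sim j) P.tower P.tower := fun z hz => .sim j z hz

theorem isOpen_tower : IsOpen P.tower := by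
  refine isOpen_iff_mem_nhds.2 fun z hz => ?_
  induction hz with
  | room z hz => exact Filter.mem_of_superset (P.isOpen_room.mem_nhds hz) P.room_subset_tower
  | sim j z _ ih =>
    exact Filter.mem_of_superset ((P.sim j).isOpenMap.image_mem_nhds ih)
      (P.mapsTo_sim_tower j).image_subset

theorem isOpen_domain : IsOpen P.domain := P.isOpen_tower.union isOpen_square

theorem mul_of_mem_triangle (hz : z ∈ triangle) :
    0 ≤ P.r * z.im ∧ P.r * z.im ≤ P.r * z.re ∧ P.r * z.im ≤ P.r - P.r * z.re := by
  obtain ⟨h0, hle, hle'⟩ := hz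
  have hr := P.r_pos
  refine ⟨by positivity, by gcongr, ?_⟩
  rw [← mul_one_sub]
  gcongr

theorem mapsTo_sim_triangle (j : Fin 4) : MapsTo (P.sim j) triangle triangle := by
  intro z hz
  have hr := P.r_pos; have hε := P.ε_pos; have hb := P.b_pos; have hsum := P.add_eq_one
  obtain ⟨h0, hle, hle'⟩ := P.mul_of_mem_triangle hz
  match j with
  | 0 => rw [sim_zero]; refine ⟨?_, ?_, ?_⟩ <;> dsimp only <;> linarith
  | 1 => rw [sim_one]; refine ⟨?_, ?_, ?_⟩ <;> dsimp only <;> linarith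
  | 2 => rw [sim_two]; refine ⟨?_, ?_, ?_⟩ <;> dsimp only <;> linarith
  | 3 => rw [sim_three]; refine ⟨?_, ?_, ?_⟩ <;> dsimp only <;> linarith

theorem hall_subset_room (j : Fin 4) : P.hall j ⊆ P.room := by
  fin_cases j <;> simp [hall, room]

theorem mapsTo_sim_porch (j : Fin 4) : MapsTo (P.sim j) P.porch (P.hall j) := by
  rintro z ⟨⟨h0, h1⟩, hb', him⟩
  have hr := P.r_pos; have hr' := P.r_lt_half; have hε := P.ε_pos
  have hsum := P.add_eq_one
  have h0r : 0 < P.r * z.re := mul_pos hr h0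
  have h1r : P.r * z.re < P.r := mul_lt_of_lt_one_right hr h1
  have himr : P.r * z.im < 0 := mul_neg_of_pos_of_neg hr him
  have hbr : -P.b < P.r * z.im := by nlinarith
  match j with
  | 0 => rw [sim_zero]; refine ⟨⟨⟨?_, ?_⟩, ?_, ?_⟩, ?_, ?_⟩ <;> dsimp only <;> linarith
  | 1 => rw [sim_one]; refine ⟨⟨?_, ?_⟩, ?_, ?_⟩ <;> dsimp only <;> linarith
  | 2 => rw [sim_two]; refine ⟨⟨?_, ?_⟩, ?_, ?_⟩ <;> dsimp only <;> linarith
  | 3 => rw [sim_three]; refine ⟨⟨⟨?_, ?_⟩, ?_, ?_⟩, ?_, ?_⟩ <;> dsimp only <;> linarith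

theorem sim_mem_room (j : Fin 4) (hz : z ∈ P.porch) : P.sim j z ∈ P.room :=
  P.hall_subset_room j (P.mapsTo_sim_porch j hz)

theorem room_subset : P.room ⊆ triangle ∪ P.porch := by
  have hr := P.r_pos; have hε := P.ε_pos
  intro z hz
  rcases le_or_gt 0 z.im with him | him
  · left
    rcases hz with ⟨-, hlt, hlt'⟩ | ⟨⟨h0, h1⟩, -, him'⟩
    · exact ⟨him, hlt.le, hlt'.le⟩
    · exact ⟨him, by linarith, by linarith⟩
  · right
    rcases hz with ⟨⟨hre, hbim, -⟩, -⟩ | ⟨⟨h0, h1⟩, hbim, -⟩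
    · exact ⟨hre, hbim, him⟩
    · exact ⟨⟨by linarith, by linarith⟩, hbim, him⟩

theorem tower_subset : P.tower ⊆ triangle ∪ P.porch := by
  intro z hz
  induction hz with
  | room z hz => exact P.room_subset hz
  | sim j z _ ih =>
    rcases ih with hz | hz
    · exact .inl (P.mapsTo_sim_triangle j hz)
    · exact P.room_subset (P.sim_mem_room j hz)

theorem isBounded_triangle : Bornology.IsBounded triangle := by
  refine (isCompact_Icc (a := (0 : ℝ)) (b := 1) |>.reProdIm
    (isCompact_Icc (a := (0 : ℝ)) (b := 1))).isBounded.subset ?_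
  rintro z ⟨h0, hle, hle'⟩
  exact ⟨⟨by linarith, by linarith⟩, by linarith, by linarith⟩

theorem isBounded_tower : Bornology.IsBounded P.tower :=
  (isBounded_triangle.union ((isBounded_Ioo _ _).reProdIm (isBounded_Ioo _ _))).subset
    P.tower_subset

theorem isBounded_domain : Bornology.IsBounded P.domain :=
  P.isBounded_tower.union ((isBounded_Ioo _ _).reProdIm (isBounded_Ioo _ _))

/-! ### The John condition -/

variable {J : ℝ}

theorem convex_strip : Convex ℝ P.strip := by
  have hleft : Convex ℝ {z : ℂ | z.im < z.re} := by
    simpa [preimage] using (convex_Iio (0 : ℝ)).linear_preimage (Complex.imLm - Complex.reLm)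
  have hright : Convex ℝ {z : ℂ | z.im < 1 - z.re} := by
    simpa [preimage, lt_sub_iff_add_lt] using
      (convex_Iio (1 : ℝ)).linear_preimage (Complex.imLm + Complex.reLm)
  exact (convex_reProdIm (convex_Ioo _ _) (convex_Ioo _ _)).inter (hleft.inter hright)

theorem convex_hall (j : Fin 4) : Convex ℝ (P.hall j) := by
  have hstrip := P.convex_strip
  have hshaft : Convex ℝ P.shaft := convex_reProdIm (convex_Ioo _ _) (convex_Ioo _ _)
  match j with
  | 0 | 3 => exact hstrip
  | 1 | 2 => exact hshaft

/-- The midpoint of the porch, where the John curves of the tower end. -/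
def exit : ℂ := ⟨1 / 2, -(P.b / 2)⟩

/-- Half the diagonal of the rectangle with sides `1` and `b + 4ε`: the bound for the length of
the John curves of the tower. -/
def radius : ℝ := √((1 / 2) ^ 2 + ((P.b + 4 * P.ε) / 2) ^ 2)

theorem ball_exit_subset_porch : ball P.exit (P.b / 2) ⊆ P.porch := by
  intro z hz
  have hb := P.b_lt_one
  obtain ⟨⟨h0, h1⟩, h2, h3⟩ := ball_subset_Ioo_reProdIm _ _ hz
  simp only [exit] at h0 h1 h2 h3
  exact ⟨⟨by linarith, by linarith⟩, by linarith, by linarith⟩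

theorem ball_exit_subset_hall (j : Fin 4) : ball P.exit (P.b / 2) ⊆ P.hall j := by
  intro z hz
  have hε := P.ε_pos; have hr := P.r_pos; have hsum := P.add_eq_one
  obtain ⟨⟨h0, h1⟩, h2, h3⟩ := ball_subset_Ioo_reProdIm _ _ hz
  simp only [exit] at h0 h1 h2 h3
  match j with
  | 0 | 3 => refine ⟨⟨⟨?_, ?_⟩, ?_, ?_⟩, ?_, ?_⟩ <;> linarith
  | 1 | 2 => refine ⟨⟨?_, ?_⟩, ?_, ?_⟩ <;> linarith

theorem ball_sim_exit_subset_hall (j : Fin 4) :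
    ball (P.sim j P.exit) (P.r * (P.b / 2)) ⊆ P.hall j := by
  intro z hz
  obtain ⟨w, rfl⟩ := (P.sim j).surjective z
  rw [mem_ball, dist_sim, mul_lt_mul_iff_right₀ P.r_pos] at hz
  exact P.mapsTo_sim_porch j (P.ball_exit_subset_porch hz)

theorem dist_exit_le_radius (hz : z ∈ P.room) : dist z P.exit ≤ P.radius := by
  have hr := P.r_pos; have hε := P.ε_pos; have hsum := P.add_eq_one
  rw [radius, ← one_mul (√_)]
  rcases hz with ⟨⟨⟨h0, h1⟩, h2, h3⟩, -⟩ | ⟨⟨h0, h1⟩, h2, h3⟩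
  · refine dist_le_mul_sqrt_of_abs_le zero_le_one ?_ ?_ <;>
      rw [abs_le] <;> constructor <;> simp only [exit] <;> linarith
  · rw [add_comm (_ ^ 2)]
    refine dist_le_mul_sqrt_of_abs_le zero_le_one ?_ ?_ <;>
      rw [abs_le] <;> constructor <;> simp only [exit] <;> linarith

theorem dist_sim_exit_le (j : Fin 4) : dist (P.sim j P.exit) P.exit ≤ (1 - P.r) * P.radius := by
  have hr := P.r_pos; have hε := P.ε_pos; have hb := P.b_pos; have hsum := P.add_eq_one
  have hr' : 0 ≤ 1 - P.r := by linarith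
  have hrε : 2 * (P.r * P.ε) ≤ P.ε := by nlinarith [P.r_lt_half]
  match j with
  | 0 | 3 =>
    refine dist_le_mul_sqrt_of_abs_le hr' ?_ ?_ <;> rw [abs_le] <;> constructor <;>
      simp only [exit, sim_zero, sim_three] <;> nlinarith
  | 1 | 2 =>
    rw [radius, add_comm (_ ^ 2)]
    refine dist_le_mul_sqrt_of_abs_le hr' ?_ ?_ <;> rw [abs_le] <;> constructor <;>
      simp only [exit, sim_one, sim_two] <;> nlinarith

theorem exists_mem_hall (hz : z ∈ P.room) : ∃ j, z ∈ P.hall j :=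
  hz.elim (fun hz => ⟨0, hz⟩) fun hz => ⟨1, hz⟩

theorem exit_mem_hall (j : Fin 4) : P.exit ∈ P.hall j :=
  P.ball_exit_subset_hall j (mem_ball_self (half_pos P.b_pos))

theorem hall_subset_tower (j : Fin 4) : P.hall j ⊆ P.tower :=
  (P.hall_subset_room j).trans P.room_subset_tower

theorem exists_carrotJoined_exit (hJ : 0 ≤ J) (hJb : J * P.radius ≤ P.b / 2) (hz : z ∈ P.tower) :
    ∃ τ ≤ P.radius, CarrotJoined P.tower J z P.exit τ := by
  have hr := P.r_pos; have hb := P.b_pos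
  have hball {τ : ℝ} (hτ : τ ≤ P.radius) (j : Fin 4) : ball P.exit (J * τ) ⊆ P.hall j :=
    (ball_subset_ball ((mul_le_mul_of_nonneg_left hτ hJ).trans hJb)).trans
      (P.ball_exit_subset_hall j)
  induction hz with
  | room z hz =>
    obtain ⟨j, hzj⟩ := P.exists_mem_hall hz
    have hdist := P.dist_exit_le_radius hz
    exact ⟨_, hdist, (CarrotJoined.of_convex hJ (P.convex_hall j) hzj (P.exit_mem_hall j)
      (hball hdist j)).mono (P.hall_subset_tower j)⟩
  | sim j z _ ih =>
    obtain ⟨τ, hτ, h⟩ := ih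
    have hstep : P.r * τ + dist (P.sim j P.exit) P.exit ≤ P.radius := by
      linarith [P.dist_sim_exit_le j, mul_le_mul_of_nonneg_left hτ hr.le]
    have hsim := (h.image_of_dist_eq_mul hr (P.dist_sim j) (P.sim j).surjective).mono
      (P.mapsTo_sim_tower j).image_subset
    have hJτ : J * (P.r * τ) ≤ P.r * (P.b / 2) := by
      rw [mul_left_comm]
      gcongr
      exact (mul_le_mul_of_nonneg_left hτ hJ).trans hJb
    exact ⟨_, hstep, hsim.trans_segment hJ (P.convex_hall j) (P.hall_subset_tower j)
      (P.ball_sim_exit_subset_hall j (mem_ball_self (by positivity))) (P.exit_mem_hall j)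
      ((ball_subset_ball hJτ).trans (P.ball_sim_exit_subset_hall j)) (hball hstep j)⟩

/-- The centre of the square, which serves as the John centre of the domain. -/
def center : ℂ := ⟨1 / 2, -(1 / 2)⟩

theorem ball_center_subset_square : ball center (1 / 2) ⊆ square := by
  convert ball_subset_Ioo_reProdIm center (1 / 2) using 1
  norm_num [square, center]

theorem center_mem_square : center ∈ square :=
  ball_center_subset_square (mem_ball_self (by norm_num))

theorem porch_subset_square : P.porch ⊆ square := by
  rintro z ⟨hre, him, him'⟩
  exact ⟨hre, by linarith [P.b_lt_one], him'⟩

theorem dist_exit_center : dist P.exit center = 1 / 2 - P.b / 2 := by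
  have hre : P.exit.re = center.re := rfl
  rw [Complex.dist_of_re_eq hre, Real.dist_eq, abs_of_nonneg] <;> simp only [exit, center] <;>
    linarith [P.b_lt_one]

theorem dist_center_le_one (hz : z ∈ square) : dist z center ≤ 1 := by
  obtain ⟨⟨h0, h1⟩, h2, h3⟩ := hz
  rw [Complex.dist_eq]
  refine (Complex.norm_le_abs_re_add_abs_im _).trans ?_
  have hre : |(z - center).re| ≤ 1 / 2 := by
    rw [abs_le]; constructor <;> simp only [Complex.sub_re, center] <;> linarith
  have him : |(z - center).im| ≤ 1 / 2 := by
    rw [abs_le]; constructor <;> simp only [Complex.sub_im, center] <;> linarith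
  linarith

theorem exists_carrotJoined_center (hJ : 0 ≤ J) (hJ2 : J ≤ 1 / 2)
    (hJb : J * P.radius ≤ P.b / 2) (hz : z ∈ P.domain) :
    ∃ τ, CarrotJoined P.domain J z center τ := by
  have hconv : Convex ℝ square := convex_reProdIm (convex_Ioo _ _) (convex_Ioo _ _)
  have hb := P.b_pos; have hb' := P.b_lt_one
  rcases hz with hz | hz
  · obtain ⟨τ, hτ, h⟩ := P.exists_carrotJoined_exit hJ hJb hz
    have hexit : ball P.exit (P.b / 2) ⊆ square :=
      P.ball_exit_subset_porch.trans P.porch_subset_square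
    have hJτ : J * τ ≤ P.b / 2 := (mul_le_mul_of_nonneg_left hτ hJ).trans hJb
    refine ⟨_, (h.mono subset_union_left).trans_segment hJ hconv subset_union_right
      (hexit (mem_ball_self (by positivity))) center_mem_square
      ((ball_subset_ball hJτ).trans hexit)
      ((ball_subset_ball ?_).trans ball_center_subset_square)⟩
    rw [dist_exit_center, mul_add]
    nlinarith
  · refine ⟨_, (CarrotJoined.of_convex hJ hconv hz center_mem_square
      ((ball_subset_ball ?_).trans ball_center_subset_square)).mono subset_union_right⟩
    exact (mul_le_of_le_one_right hJ (dist_center_le_one hz)).trans hJ2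

/-! ### The fractal arc -/

/-- The boundary of a tower runs alternately through five segments of the boundary of the room and
four similar copies of itself: `piece k s z` is the point of the `k`-th of these nine pieces at
time `s`, where `z` is the point of the whole curve at time `s`. -/
def piece (k : Fin 9) (s : ℝ) (z : ℂ) : ℂ :=
  ![⟨P.ε * s, P.ε * s⟩, P.sim 0 z, ⟨P.r + P.ε + P.ε * s, P.ε⟩, P.sim 1 z,
    ⟨P.r + 2 * P.ε + P.b * s, P.r + P.ε⟩, P.sim 2 z, ⟨1 - (P.r + 2 * P.ε) + P.ε * s, P.ε⟩,
    P.sim 3 z, ⟨1 - P.ε + P.ε * s, P.ε - P.ε * s⟩] k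

theorem continuous_uncurry_piece (k : Fin 9) : Continuous (Function.uncurry (P.piece k)) := by
  match k with
  | 0 | 2 | 4 | 6 | 8 => exact continuous_complex_mk (by fun_prop) (by fun_prop)
  | 1 => exact (P.sim 0).continuous.comp continuous_snd
  | 3 => exact (P.sim 1).continuous.comp continuous_snd
  | 5 => exact (P.sim 2).continuous.comp continuous_snd
  | 7 => exact (P.sim 3).continuous.comp continuous_snd

/-- The ratio of the similarities as a Lipschitz constant. -/
def ratio : NNReal := ⟨P.r, P.r_pos.le⟩

theorem ratio_lt_one : P.ratio < 1 := by
  rw [← NNReal.coe_lt_coe]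
  exact P.r_lt_half.trans (by norm_num)

theorem lipschitzWith_sim (j : Fin 4) : LipschitzWith P.ratio (P.sim j) :=
  LipschitzWith.of_dist_le_mul fun z w => (P.dist_sim j z w).le

theorem lipschitzWith_piece (k : Fin 9) (s : ℝ) : LipschitzWith P.ratio (P.piece k s) := by
  match k with
  | 0 | 2 | 4 | 6 | 8 => exact LipschitzWith.const' _
  | 1 => exact P.lipschitzWith_sim 0
  | 3 => exact P.lipschitzWith_sim 1
  | 5 => exact P.lipschitzWith_sim 2
  | 7 => exact P.lipschitzWith_sim 3

theorem piece_castSucc_one (k : Fin 8) : P.piece k.castSucc 1 1 = P.piece k.succ 0 0 := by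
  have hsum := P.add_eq_one
  fin_cases k <;> apply Complex.ext <;>
    simp [piece, sim_zero, sim_one, sim_two, sim_three] <;> linarith

theorem exists_selfSimilar_curve : ∃ γ : ℝ → ℂ, Continuous γ ∧ γ 0 = 0 ∧ γ 1 = 1 ∧
    IsConcatenation γ fun k s => P.piece k s (γ s) :=
  exists_continuous_isConcatenation_self (PathConnectedSpace.joined 0 1)
    P.continuous_uncurry_piece P.ratio_lt_one (fun k s _ => P.lipschitzWith_piece k s)
    (by apply Complex.ext <;> simp [piece]) (by apply Complex.ext <;> simp [piece])
    P.piece_castSucc_one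

/-- The self-similar curve from `0` to `1` that bounds the tower from above. -/
def curve : ℝ → ℂ := P.exists_selfSimilar_curve.choose

theorem continuous_curve : Continuous P.curve := P.exists_selfSimilar_curve.choose_spec.1

theorem curve_zero : P.curve 0 = 0 := P.exists_selfSimilar_curve.choose_spec.2.1

theorem curve_one : P.curve 1 = 1 := P.exists_selfSimilar_curve.choose_spec.2.2.1

theorem isConcatenation_curve : IsConcatenation P.curve fun k s => P.piece k s (P.curve s) :=
  P.exists_selfSimilar_curve.choose_spec.2.2.2

/-- The fractal part of the boundary of the domain. -/
def arc : Set ℂ := P.curve '' Icc 0 1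

theorem isCompact_arc : IsCompact P.arc := isCompact_Icc.image P.continuous_curve

theorem zero_mem_arc : 0 ∈ P.arc := ⟨0, by simp, P.curve_zero⟩

theorem one_mem_arc : 1 ∈ P.arc := ⟨1, by simp, P.curve_one⟩

theorem piece_mem_arc (k : Fin 9) {s : ℝ} (hs : s ∈ Icc (0 : ℝ) 1) :
    P.piece k s (P.curve s) ∈ P.arc := by
  rw [arc, P.isConcatenation_curve.image_Icc]
  exact mem_iUnion.2 ⟨k, mem_image_of_mem _ hs⟩

theorem mapsTo_sim_arc (j : Fin 4) : MapsTo (P.sim j) P.arc P.arc := by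
  rintro _ ⟨s, hs, rfl⟩
  match j with
  | 0 => exact P.piece_mem_arc 1 hs
  | 1 => exact P.piece_mem_arc 3 hs
  | 2 => exact P.piece_mem_arc 5 hs
  | 3 => exact P.piece_mem_arc 7 hs

/-- The five segments of the boundary of the room that connect the doors of the next
generation. -/
def connectors : Set ℂ :=
  {z | z.im = z.re ∧ 0 ≤ z.re ∧ z.re ≤ P.ε} ∪
  {z | z.im = P.ε ∧ P.r + P.ε ≤ z.re ∧ z.re ≤ P.r + 2 * P.ε} ∪
  {z | z.im = P.r + P.ε ∧ P.r + 2 * P.ε ≤ z.re ∧ z.re ≤ 1 - (P.r + 2 * P.ε)} ∪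
  {z | z.im = P.ε ∧ 1 - (P.r + 2 * P.ε) ≤ z.re ∧ z.re ≤ 1 - (P.r + P.ε)} ∪
  {z | z.im = 1 - z.re ∧ 1 - P.ε ≤ z.re ∧ z.re ≤ 1}

theorem connectors_subset_arc : P.connectors ⊆ P.arc := by
  have hε := P.ε_pos; have hb := P.b_pos; have hsum := P.add_eq_one
  have hmem (k : Fin 9) {z : ℂ} {x a c : ℝ} (hc : 0 < c) (ha : a ≤ x) (hac : x ≤ a + c)
      (hz : P.piece k ((x - a) / c) (P.curve ((x - a) / c)) = z) : z ∈ P.arc :=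
    hz ▸ P.piece_mem_arc k
      ⟨div_nonneg (by linarith) hc.le, (div_le_one hc).2 (by linarith)⟩
  rintro z ((((⟨him, h0, h1⟩ | ⟨him, h0, h1⟩) | ⟨him, h0, h1⟩) | ⟨him, h0, h1⟩) | ⟨him, h0, h1⟩)
  · refine hmem 0 hε h0 (by linarith) (Complex.ext ?_ ?_) <;>
      simp [piece, mul_div_cancel₀ _ hε.ne', him]
  · refine hmem 2 hε h0 (by linarith) (Complex.ext ?_ ?_) <;>
      simp [piece, mul_div_cancel₀ _ hε.ne', him]
  · refine hmem 4 hb h0 (by linarith) (Complex.ext ?_ ?_) <;>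
      simp [piece, mul_div_cancel₀ _ hb.ne', him]
  · refine hmem 6 hε h0 (by linarith) (Complex.ext ?_ ?_) <;>
      simp [piece, mul_div_cancel₀ _ hε.ne', him]
  · refine hmem 8 hε h0 (by linarith) (Complex.ext ?_ ?_)
    · simp [piece, mul_div_cancel₀ _ hε.ne']
    · simp [piece, mul_div_cancel₀ _ hε.ne', him]
      ring

theorem arc_subset_connectors_union : P.arc ⊆ P.connectors ∪ ⋃ j, P.sim j '' P.arc := by
  have hε := P.ε_pos; have hb := P.b_pos; have hsum := P.add_eq_one
  have hsim (j : Fin 4) {s : ℝ} (hs : s ∈ Icc (0 : ℝ) 1) :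
      P.sim j (P.curve s) ∈ P.connectors ∪ ⋃ j, P.sim j '' P.arc :=
    .inr (mem_iUnion.2 ⟨j, mem_image_of_mem _ (mem_image_of_mem _ hs)⟩)
  conv_lhs => rw [arc, P.isConcatenation_curve.image_Icc]
  refine iUnion_subset fun k => ?_
  rintro _ ⟨s, hs, rfl⟩
  have hε0 : 0 ≤ P.ε * s := mul_nonneg hε.le hs.1
  have hε1 : P.ε * s ≤ P.ε := mul_le_of_le_one_right hε.le hs.2
  have hb0 : 0 ≤ P.b * s := mul_nonneg hb.le hs.1
  have hb1 : P.b * s ≤ P.b := mul_le_of_le_one_right hb.le hs.2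
  match k with
  | 0 => refine .inl (.inl (.inl (.inl (.inl ⟨?_, ?_, ?_⟩)))) <;> simp [piece] <;> linarith
  | 1 => exact hsim 0 hs
  | 2 => refine .inl (.inl (.inl (.inl (.inr ⟨?_, ?_, ?_⟩)))) <;> simp [piece] <;> linarith
  | 3 => exact hsim 1 hs
  | 4 => refine .inl (.inl (.inl (.inr ⟨?_, ?_, ?_⟩))) <;> simp [piece] <;> linarith
  | 5 => exact hsim 2 hs
  | 6 => refine .inl (.inl (.inr ⟨?_, ?_, ?_⟩)) <;> simp [piece] <;> linarith
  | 7 => exact hsim 3 hs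
  | 8 => refine .inl (.inr ⟨?_, ?_, ?_⟩) <;> simp [piece] <;> linarith

theorem subset_of_subset_union_iUnion_sim {A S : Set ℂ} (hSc : IsClosed S) (hSne : S.Nonempty)
    (hS : ∀ j, MapsTo (P.sim j) S S) (hA : Bornology.IsBounded A)
    (hAS : A ⊆ S ∪ ⋃ j, P.sim j '' A) : A ⊆ S :=
  subset_of_subset_union_iUnion_image P.ratio_lt_one P.lipschitzWith_sim hSc hSne hS hA hAS

theorem connectors_subset_triangle : P.connectors ⊆ triangle := by
  have hr := P.r_pos; have hε := P.ε_pos; have hb := P.b_pos; have hsum := P.add_eq_one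
  rintro z ((((⟨him, h0, h1⟩ | ⟨him, h0, h1⟩) | ⟨him, h0, h1⟩) | ⟨him, h0, h1⟩) | ⟨him, h0, h1⟩) <;>
    refine ⟨?_, ?_, ?_⟩ <;> linarith

theorem arc_subset_triangle : P.arc ⊆ triangle :=
  P.subset_of_subset_union_iUnion_sim isClosed_triangle ⟨0, by simp [triangle]⟩
    P.mapsTo_sim_triangle P.isCompact_arc.isBounded
    (P.arc_subset_connectors_union.trans (union_subset_union_left _ P.connectors_subset_triangle))

theorem eq_of_sim_eq_sim {j k : Fin 4} {w : ℂ} (hz : z ∈ triangle) (hw : w ∈ triangle)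
    (h : P.sim j z = P.sim k w) : j = k := by
  have hε := P.ε_pos; have hb := P.b_pos; have hsum := P.add_eq_one
  obtain ⟨hz0, hz1, hz2⟩ := P.mul_of_mem_triangle hz
  obtain ⟨hw0, hw1, hw2⟩ := P.mul_of_mem_triangle hw
  by_contra hne
  have hre := congrArg Complex.re h
  have him := congrArg Complex.im h
  fin_cases j <;> fin_cases k <;> first
    | exact hne rfl
    | simp only [Fin.zero_eta, Fin.mk_one, Fin.reduceFinMk, sim_zero, sim_one, sim_two,
        sim_three] at hre him
      linarith

theorem eq_zero_or_one_of_sim_mem_connectors {j : Fin 4} (hz : z ∈ triangle)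
    (h : P.sim j z ∈ P.connectors) : z = 0 ∨ z = 1 := by
  have hr := P.r_pos; have hε := P.ε_pos; have hb := P.b_pos; have hsum := P.add_eq_one
  obtain ⟨hz0, hz1, hz2⟩ := P.mul_of_mem_triangle hz
  suffices (P.r * z.re = P.r * 0 ∨ P.r * z.re = P.r * 1) ∧ P.r * z.im = P.r * 0 by
    simpa only [mul_right_inj' hr.ne', or_and_right, Complex.ext_iff, Complex.zero_re,
      Complex.zero_im, Complex.one_re, Complex.one_im] using this
  rw [mul_zero, mul_one]
  simp only [connectors, mem_union, mem_ofPred_eq] at h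
  fin_cases j <;> simp only [Fin.zero_eta, Fin.mk_one, Fin.reduceFinMk, sim_zero, sim_one,
      sim_two, sim_three] at h <;>
    obtain ((((⟨him, -, h1⟩ | ⟨him, h0, h1⟩) | ⟨him, -⟩) | ⟨him, h0, h1⟩) | ⟨him, h0, -⟩) :=
      h <;>
    first
    | exfalso; linarith
    | exact ⟨.inl (by linarith), by linarith⟩
    | exact ⟨.inr (by linarith), by linarith⟩

/-! ### The frontier of the domain -/

theorem sim_notMem_room (j : Fin 4) (hz : z ∈ triangle) : P.sim j z ∉ P.room := by
  have hε := P.ε_pos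
  obtain ⟨h0, h1, h2⟩ := P.mul_of_mem_triangle hz
  match j with
  | 0 => rw [sim_zero]; rintro (⟨⟨-, -, him⟩, -⟩ | ⟨⟨hre, -⟩, -⟩) <;> linarith
  | 1 => rw [sim_one]; rintro (⟨⟨-, -, him⟩, -⟩ | ⟨⟨hre, -⟩, -⟩) <;> linarith
  | 2 => rw [sim_two]; rintro (⟨⟨-, -, him⟩, -⟩ | ⟨⟨-, hre⟩, -⟩) <;> linarith
  | 3 => rw [sim_three]; rintro (⟨⟨-, -, him⟩, -⟩ | ⟨⟨-, hre⟩, -⟩) <;> linarith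

theorem disjoint_room_connectors : Disjoint P.room P.connectors := by
  have hr := P.r_pos; have hε := P.ε_pos
  rw [Set.disjoint_left]
  rintro z (⟨⟨-, -, him⟩, hlt, hlt'⟩ | ⟨⟨hre, hre'⟩, -, him⟩)
    ((((⟨h, -⟩ | ⟨h, -, h1⟩) | ⟨h, -⟩) | ⟨h, h0, -⟩) | ⟨h, -⟩) <;> linarith

theorem disjoint_tower_arc : Disjoint P.tower P.arc := by
  have hroom {z : ℂ} (hz : z ∈ P.room) : z ∉ P.arc := fun harc => by
    rcases P.arc_subset_connectors_union harc with hconn | hsim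
    · exact P.disjoint_room_connectors.notMem_of_mem_left hz hconn
    · obtain ⟨j, w, hw, rfl⟩ := mem_iUnion.1 hsim
      exact P.sim_notMem_room j (P.arc_subset_triangle hw) hz
  refine Set.disjoint_left.2 fun z hz => ?_
  induction hz with
  | room z hz => exact hroom hz
  | sim j z hz ih =>
    rcases P.tower_subset hz with htri | hporch
    · intro harc
      rcases P.arc_subset_connectors_union harc with hconn | hsim
      · rcases P.eq_zero_or_one_of_sim_mem_connectors htri hconn with rfl | rfl
        · exact ih P.zero_mem_arc
        · exact ih P.one_mem_arc
      · obtain ⟨k, w, hw, heq⟩ := mem_iUnion.1 hsim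
        obtain rfl := P.eq_of_sim_eq_sim (P.arc_subset_triangle hw) htri heq
        exact ih ((P.sim k).injective heq ▸ hw)
    · exact hroom (P.sim_mem_room j hporch)

theorem mem_closure_of_openSegment_subset {S : Set ℂ} {w : ℂ} (h : openSegment ℝ z w ⊆ S) :
    z ∈ closure S :=
  closure_mono h (segment_subset_closure_openSegment (left_mem_segment ℝ z w))

theorem connectors_subset_closure_room : P.connectors ⊆ closure P.room := by
  have hr := P.r_pos; have hε := P.ε_pos; have hb := P.b_pos; have hsum := P.add_eq_one
  intro z hz
  refine mem_closure_of_openSegment_subset (w := (1 / 2 : ℝ)) ?_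
  rintro _ ⟨s, t, hs, ht, hst, rfl⟩
  obtain rfl : s = 1 - t := by linarith
  have hrt : 0 < t * P.r := by positivity
  have hεt : 0 < t * P.ε := by positivity
  have hbt : 0 < t * P.b := by positivity
  have hre : ((1 - t) • z + t • ((1 / 2 : ℝ) : ℂ)).re = z.re + t * (1 / 2 - z.re) := by
    simp; ring
  have him : ((1 - t) • z + t • ((1 / 2 : ℝ) : ℂ)).im = z.im - t * z.im := by simp; ring
  rcases hz with (((⟨h, h0, h1⟩ | ⟨h, h0, h1⟩) | ⟨h, h0, h1⟩) | ⟨h, h0, h1⟩) | ⟨h, h0, h1⟩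
  · refine .inl ⟨⟨⟨?_, ?_⟩, ?_, ?_⟩, ?_, ?_⟩ <;> simp only [hre, him] <;> nlinarith
  · refine .inl ⟨⟨⟨?_, ?_⟩, ?_, ?_⟩, ?_, ?_⟩ <;> simp only [hre, him] <;> nlinarith
  · refine .inr ⟨⟨?_, ?_⟩, ?_, ?_⟩ <;> simp only [hre, him] <;> nlinarith
  · refine .inl ⟨⟨⟨?_, ?_⟩, ?_, ?_⟩, ?_, ?_⟩ <;> simp only [hre, him] <;> nlinarith
  · refine .inl ⟨⟨⟨?_, ?_⟩, ?_, ?_⟩, ?_, ?_⟩ <;> simp only [hre, him] <;> nlinarith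

theorem arc_subset_closure_tower : P.arc ⊆ closure P.tower := by
  refine P.subset_of_subset_union_iUnion_sim isClosed_closure
    ⟨_, subset_closure (P.hall_subset_tower 0 (P.exit_mem_hall 0))⟩
    (fun j => (P.mapsTo_sim_tower j).closure (P.sim j).continuous) P.isCompact_arc.isBounded ?_
  exact P.arc_subset_connectors_union.trans (union_subset_union_left _
    (P.connectors_subset_closure_room.trans (closure_mono P.room_subset_tower)))

theorem mem_tower_union_arc_of_im_eq_zero (him : z.im = 0) (hre : z.re ∈ Icc 0 1) :
    z ∈ P.tower ∪ P.arc := by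
  have hε := P.ε_pos; have hb := P.b_pos
  rcases hre.1.eq_or_lt with h0 | h0
  · obtain rfl : z = 0 := Complex.ext h0.symm him
    exact .inr P.zero_mem_arc
  rcases hre.2.eq_or_lt with h1 | h1
  · obtain rfl : z = 1 := Complex.ext h1 him
    exact .inr P.one_mem_arc
  exact .inl (.room z (.inl ⟨⟨⟨h0, h1⟩, by linarith, by linarith⟩, by linarith, by linarith⟩))

theorem mem_tower_union_arc_of_sim_eq {j : Fin 4} {x : ℝ} (hx : x ∈ Icc 0 P.r)
    (h : P.sim j (x / P.r : ℝ) = z) : z ∈ P.tower ∪ P.arc := by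
  have hdoor : ((x / P.r : ℝ) : ℂ) ∈ P.tower ∪ P.arc :=
    P.mem_tower_union_arc_of_im_eq_zero (Complex.ofReal_im _)
      ⟨div_nonneg hx.1 P.r_pos.le, (div_le_one P.r_pos).2 hx.2⟩
  exact h ▸ hdoor.imp (@P.mapsTo_sim_tower j _) (@P.mapsTo_sim_arc j _)

theorem mem_tower_union_arc_of_im_eq (him : z.im = P.ε) (hre : z.re ∈ Icc P.ε (1 - P.ε)) :
    z ∈ P.tower ∪ P.arc := by
  have hr := P.r_pos; have hε := P.ε_pos; have hb := P.b_pos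
  obtain ⟨h0, h1⟩ := hre
  have hmul (x : ℝ) : P.r * (x / P.r) = x := mul_div_cancel₀ x hr.ne'
  rcases le_or_gt z.re (P.r + P.ε) with hA | hA
  · exact P.mem_tower_union_arc_of_sim_eq (j := 0) (x := z.re - P.ε)
      ⟨by linarith, by linarith⟩ (by apply Complex.ext <;> simp [sim_zero, hmul, him])
  rcases le_or_gt z.re (P.r + 2 * P.ε) with hB | hB
  · exact .inr (P.connectors_subset_arc (.inl (.inl (.inl (.inr ⟨him, hA.le, hB⟩)))))
  rcases lt_or_ge z.re (1 - (P.r + 2 * P.ε)) with hC | hC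
  · exact .inl (.room z (.inr ⟨⟨hB, hC⟩, by linarith, by linarith⟩))
  rcases le_or_gt z.re (1 - (P.r + P.ε)) with hD | hD
  · exact .inr (P.connectors_subset_arc (.inl (.inr ⟨him, hC, hD⟩)))
  · exact P.mem_tower_union_arc_of_sim_eq (j := 3) (x := z.re - (1 - (P.r + P.ε)))
      ⟨by linarith, by linarith⟩ (by apply Complex.ext <;> simp [sim_three, hmul, him])

theorem closure_strip_inter_triangle_subset : closure P.strip ∩ triangle ⊆ P.tower ∪ P.arc := by
  have hb := P.b_pos
  have hclosure : closure P.strip ⊆ {z | z.im ≤ P.ε} :=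
    closure_minimal (fun z hz => hz.1.2.2.le)
      (isClosed_le (g := fun _ : ℂ => P.ε) (by fun_prop) (by fun_prop))
  rintro z ⟨hz, h0, h1, h2⟩
  have him : z.im ≤ P.ε := hclosure hz
  rcases h1.eq_or_lt with h1' | h1'
  · exact .inr (P.connectors_subset_arc
      (.inl (.inl (.inl (.inl ⟨h1', by linarith, by linarith⟩)))))
  rcases h2.eq_or_lt with h2' | h2'
  · exact .inr (P.connectors_subset_arc (.inr ⟨h2', by linarith, by linarith⟩))
  rcases him.eq_or_lt with him' | him'
  · exact P.mem_tower_union_arc_of_im_eq him' ⟨by linarith, by linarith⟩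
  · exact .inl (.room z
      (.inl ⟨⟨⟨by linarith, by linarith⟩, by linarith, him'⟩, h1', h2'⟩))

theorem closure_shaft_inter_triangle_subset : closure P.shaft ∩ triangle ⊆ P.tower ∪ P.arc := by
  have hr := P.r_pos; have hε := P.ε_pos; have hb := P.b_pos; have hsum := P.add_eq_one
  have hmul (x : ℝ) : P.r * (x / P.r) = x := mul_div_cancel₀ x hr.ne'
  rw [shaft, Complex.closure_reProdIm, closure_Ioo (by linarith), closure_Ioo (by linarith)]
  rintro z ⟨⟨⟨hre, hre'⟩, -, him⟩, h0, -⟩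
  rcases him.eq_or_lt with him' | him'
  · exact .inr (P.connectors_subset_arc (.inl (.inl (.inr ⟨him', hre, hre'⟩))))
  rcases lt_or_ge z.im P.ε with hlow | hhigh
  · exact .inl (.room z (.inl
      ⟨⟨⟨by linarith, by linarith⟩, by linarith, hlow⟩, by linarith, by linarith⟩))
  rcases hre.eq_or_lt with hleft | hleft
  · exact P.mem_tower_union_arc_of_sim_eq (j := 1) (x := z.im - P.ε)
      ⟨by linarith, by linarith⟩ (by apply Complex.ext <;> simp [sim_one, hmul, hleft])
  rcases hre'.eq_or_lt with hright | hright
  · exact P.mem_tower_union_arc_of_sim_eq (j := 2) (x := P.r + P.ε - z.im)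
      ⟨by linarith, by linarith⟩ (by apply Complex.ext <;> simp [sim_two, hmul, hright])
  · exact .inl (.room z (.inr ⟨⟨hleft, hright⟩, by linarith, him'⟩))

theorem closure_tower_subset : closure P.tower ⊆ triangle ∪ closure P.porch :=
  closure_minimal (P.tower_subset.trans (union_subset_union_right _ subset_closure))
    (isClosed_triangle.union isClosed_closure)

theorem closure_tower_subset_closure_room_union :
    closure P.tower ⊆ closure P.room ∪ ⋃ j, P.sim j '' closure P.tower := by
  refine closure_minimal (fun z hz => ?_) <| isClosed_closure.union <|
    isClosed_iUnion_of_finite fun j => (P.sim j).isClosedMap _ isClosed_closure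
  cases hz with
  | room z hz => exact .inl (subset_closure hz)
  | sim j z hz => exact .inr (mem_iUnion.2 ⟨j, mem_image_of_mem _ (subset_closure hz)⟩)

theorem closure_tower_inter_triangle_subset : closure P.tower ∩ triangle ⊆ P.tower ∪ P.arc := by
  suffices (closure P.tower ∩ triangle) \ P.tower ⊆ P.arc from sdiff_subset_iff.1 this
  have hroom : (closure P.room ∩ triangle) \ P.tower ⊆ P.arc := by
    rw [sdiff_subset_iff, room, closure_union, union_inter_distrib_right]
    exact union_subset P.closure_strip_inter_triangle_subset P.closure_shaft_inter_triangle_subset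
  refine P.subset_of_subset_union_iUnion_sim P.isCompact_arc.isClosed ⟨0, P.zero_mem_arc⟩
    P.mapsTo_sim_arc (isBounded_triangle.subset fun z hz => hz.1.2) ?_
  rintro z ⟨⟨hz, htri⟩, htower⟩
  rcases P.closure_tower_subset_closure_room_union hz with hz | hz
  · exact .inl (hroom ⟨⟨hz, htri⟩, htower⟩)
  obtain ⟨j, w, hw, rfl⟩ := mem_iUnion.1 hz
  rcases P.closure_tower_subset hw with hw' | hw'
  · exact .inr (mem_iUnion.2 ⟨j, w, ⟨⟨hw, hw'⟩, fun h => htower (P.mapsTo_sim_tower j h)⟩, rfl⟩)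
  · refine .inl (hroom ⟨⟨?_, htri⟩, htower⟩)
    exact map_mem_closure (P.sim j).continuous hw' fun _ => P.sim_mem_room j

/-- The three sides of the square other than the door. -/
def sides : Set ℂ :=
  {z | z.re = 1 ∧ -1 ≤ z.im ∧ z.im ≤ 0} ∪ {z | z.im = -1 ∧ 0 ≤ z.re ∧ z.re ≤ 1} ∪
    {z | z.re = 0 ∧ -1 ≤ z.im ∧ z.im ≤ 0}

theorem closure_square : closure square = Icc 0 1 ×ℂ Icc (-1) 0 := by
  rw [square, Complex.closure_reProdIm, closure_Ioo (by norm_num), closure_Ioo (by norm_num)]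

theorem sides_subset_closure_square : sides ⊆ closure square := by
  rw [closure_square]
  rintro z ((⟨h, h0, h1⟩ | ⟨h, h0, h1⟩) | ⟨h, h0, h1⟩) <;>
    refine ⟨⟨?_, ?_⟩, ?_, ?_⟩ <;> linarith

theorem closure_square_subset : closure square ⊆ P.domain ∪ (P.arc ∪ sides) := by
  rw [closure_square]
  rintro z ⟨⟨h0, h1⟩, h2, h3⟩
  rcases h3.eq_or_lt with h3' | h3'
  · exact (P.mem_tower_union_arc_of_im_eq_zero h3' ⟨h0, h1⟩).imp .inl .inl
  rcases h1.eq_or_lt with h1' | h1'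
  · exact .inr (.inr (.inl (.inl ⟨h1', h2, h3⟩)))
  rcases h2.eq_or_lt with h2' | h2'
  · exact .inr (.inr (.inl (.inr ⟨h2'.symm, h0, h1⟩)))
  rcases h0.eq_or_lt with h0' | h0'
  · exact .inr (.inr (.inr ⟨h0'.symm, h2, h3⟩))
  · exact .inl (.inr ⟨⟨h0', h1'⟩, h2', h3'⟩)

theorem closure_domain_subset : closure P.domain ⊆ P.domain ∪ (P.arc ∪ sides) := by
  rw [domain, closure_union]
  refine union_subset (fun z hz => ?_) P.closure_square_subset
  rcases P.closure_tower_subset hz with htri | hporch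
  · exact (P.closure_tower_inter_triangle_subset ⟨hz, htri⟩).imp .inl .inl
  · exact P.closure_square_subset (closure_mono P.porch_subset_square hporch)

theorem disjoint_domain_arc : Disjoint P.domain P.arc :=
  P.disjoint_tower_arc.union_left <| Set.disjoint_left.2 fun _ hz harc =>
    hz.2.2.not_ge (P.arc_subset_triangle harc).1

theorem disjoint_domain_sides : Disjoint P.domain sides := by
  have hdoor {z : ℂ} (htri : z ∈ triangle) (hz : z ∈ sides) : z = 0 ∨ z = 1 := by
    obtain ⟨h0, -⟩ := htri
    rcases hz with (⟨h, -, h'⟩ | ⟨h, -⟩) | ⟨h, -, h'⟩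
    · exact .inr (Complex.ext h (le_antisymm h' h0))
    · linarith
    · exact .inl (Complex.ext h (le_antisymm h' h0))
  have hlow {z : ℂ} (h : z ∈ square) : z ∉ sides := by
    obtain ⟨⟨h0, h1⟩, h2, -⟩ := h
    rintro ((⟨h, -⟩ | ⟨h, -⟩) | ⟨h, -⟩) <;> linarith
  refine Set.disjoint_left.2 fun z hz hsides => ?_
  rcases hz with hz | hz
  · rcases P.tower_subset hz with htri | hporch
    · rcases hdoor htri hsides with rfl | rfl
      · exact P.disjoint_tower_arc.notMem_of_mem_left hz P.zero_mem_arc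
      · exact P.disjoint_tower_arc.notMem_of_mem_left hz P.one_mem_arc
    · exact hlow (P.porch_subset_square hporch) hsides
  · exact hlow hz hsides

theorem frontier_domain : frontier P.domain = P.arc ∪ sides := by
  rw [P.isOpen_domain.frontier_eq]
  refine (sdiff_subset_iff.2 P.closure_domain_subset).antisymm (subset_sdiff.2 ⟨?_, ?_⟩)
  · exact union_subset (P.arc_subset_closure_tower.trans (closure_mono subset_union_left))
      (sides_subset_closure_square.trans (closure_mono subset_union_right))
  · exact (P.disjoint_domain_arc.union_right P.disjoint_domain_sides).symm

/-! ### The frontier as a Jordan curve -/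

theorem curve_mem_triangle {s : ℝ} (hs : s ∈ Icc (0 : ℝ) 1) : P.curve s ∈ triangle :=
  P.arc_subset_triangle (mem_image_of_mem _ hs)

theorem piece_re_lt_one {k : Fin 9} {s : ℝ} (hs : s ∈ Ico (0 : ℝ) 1) (hz : z ∈ triangle) :
    (P.piece k s z).re < 1 := by
  have hr := P.r_pos; have hε := P.ε_pos; have hb := P.b_pos; have hsum := P.add_eq_one
  obtain ⟨-, hεs⟩ := mul_mem_Ico hε hs
  obtain ⟨-, hbs⟩ := mul_mem_Ico hb hs
  obtain ⟨h0, h1, h2⟩ := P.mul_of_mem_triangle hz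
  fin_cases k <;>
    simp only [piece, Fin.zero_eta, Fin.mk_one, Fin.reduceFinMk, Matrix.cons_val, sim_zero,
      sim_one, sim_two, sim_three] <;>
    linarith

theorem curve_re_lt_one {s : ℝ} (hs : s ∈ Ico (0 : ℝ) 1) : (P.curve s).re < 1 := by
  obtain ⟨k, t, ht, rfl⟩ := exists_fin_add_div_of_mem_Ico 8 hs
  rw [P.isConcatenation_curve k t (Ico_subset_Icc_self ht)]
  exact P.piece_re_lt_one ht (P.curve_mem_triangle (Ico_subset_Icc_self ht))

theorem eq_of_piece_eq_piece {k l : Fin 9} {s t : ℝ} {w : ℂ} (hs : s ∈ Ico (0 : ℝ) 1)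
    (ht : t ∈ Ico (0 : ℝ) 1) (hz : z ∈ triangle) (hz1 : z.re < 1) (hw : w ∈ triangle)
    (hw1 : w.re < 1) (h : P.piece k s z = P.piece l t w) : k = l := by
  have hε := P.ε_pos; have hb := P.b_pos; have hsum := P.add_eq_one
  obtain ⟨hεs, hεs'⟩ := mul_mem_Ico hε hs
  obtain ⟨hbs, hbs'⟩ := mul_mem_Ico hb hs
  obtain ⟨hεt, hεt'⟩ := mul_mem_Ico hε ht
  obtain ⟨hbt, hbt'⟩ := mul_mem_Ico hb ht
  obtain ⟨hz0, hzl, hzr⟩ := P.mul_of_mem_triangle hz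
  obtain ⟨hw0, hwl, hwr⟩ := P.mul_of_mem_triangle hw
  have hz1' : P.r * z.re < P.r := mul_lt_of_lt_one_right P.r_pos hz1
  have hw1' : P.r * w.re < P.r := mul_lt_of_lt_one_right P.r_pos hw1
  by_contra hne
  have hre := congrArg Complex.re h
  have him := congrArg Complex.im h
  fin_cases k <;> fin_cases l <;> first
    | exact hne rfl
    | simp only [piece, Fin.zero_eta, Fin.mk_one, Fin.reduceFinMk, Matrix.cons_val, sim_zero,
        sim_one, sim_two, sim_three] at hre him
      linarith

theorem eq_or_eq_of_piece_eq_piece {k : Fin 9} {s t : ℝ} {w : ℂ}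
    (h : P.piece k s z = P.piece k t w) : s = t ∨ z = w := by
  match k with
  | 0 | 2 | 4 | 6 | 8 =>
    have hre := congrArg Complex.re h
    simp only [piece] at hre
    exact .inl (by simpa [P.ε_pos.ne', P.b_pos.ne'] using hre)
  | 1 => exact .inr ((P.sim 0).injective h)
  | 3 => exact .inr ((P.sim 1).injective h)
  | 5 => exact .inr ((P.sim 2).injective h)
  | 7 => exact .inr ((P.sim 3).injective h)

theorem injOn_curve : InjOn P.curve (Ico 0 1) := by
  refine P.isConcatenation_curve.injOn_Ico (by norm_num) fun k l s hs t ht h => ?_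
  obtain rfl : k = l := P.eq_of_piece_eq_piece hs ht
    (P.curve_mem_triangle (Ico_subset_Icc_self hs)) (P.curve_re_lt_one hs)
    (P.curve_mem_triangle (Ico_subset_Icc_self ht)) (P.curve_re_lt_one ht) h
  exact ⟨rfl, P.eq_or_eq_of_piece_eq_piece h⟩

/-- The four paths of which the boundary of the domain consists: the fractal curve followed by the
three sides of the square. -/
def loopPiece (k : Fin 4) (t : ℝ) : ℂ := ![P.curve t, ⟨1, -t⟩, ⟨1 - t, -1⟩, ⟨0, t - 1⟩] k

theorem continuous_loopPiece (k : Fin 4) : Continuous (P.loopPiece k) := by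
  match k with
  | 0 => exact P.continuous_curve
  | 1 | 2 | 3 => exact continuous_complex_mk (by fun_prop) (by fun_prop)

theorem iUnion_loopPiece_image : ⋃ k, P.loopPiece k '' Icc 0 1 = P.arc ∪ sides := by
  have himage {f : ℝ → ℂ} {S : Set ℂ} (g : ℂ → ℝ) (hf : ∀ t ∈ Icc (0 : ℝ) 1, f t ∈ S)
      (hg : ∀ z ∈ S, g z ∈ Icc (0 : ℝ) 1 ∧ f (g z) = z) : f '' Icc 0 1 = S :=
    (image_subset_iff.2 hf).antisymm fun z hz => ⟨g z, hg z hz⟩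
  have h1 : P.loopPiece 1 '' Icc 0 1 = {z | z.re = 1 ∧ -1 ≤ z.im ∧ z.im ≤ 0} := by
    refine himage (fun z => -z.im) (fun t ht => ?_) fun z hz => ?_
    · exact ⟨rfl, neg_le_neg ht.2, neg_nonpos.2 ht.1⟩
    · exact ⟨⟨by linarith [hz.2.2], by linarith [hz.2.1]⟩, Complex.ext hz.1.symm (neg_neg _)⟩
  have h2 : P.loopPiece 2 '' Icc 0 1 = {z | z.im = -1 ∧ 0 ≤ z.re ∧ z.re ≤ 1} := by
    refine himage (fun z => 1 - z.re) (fun t ht => ?_) fun z hz => ?_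
    · exact ⟨rfl, sub_nonneg.2 ht.2, sub_le_self _ ht.1⟩
    · exact ⟨⟨by linarith [hz.2.2], by linarith [hz.2.1]⟩,
        Complex.ext (sub_sub_cancel _ _) hz.1.symm⟩
  have h3 : P.loopPiece 3 '' Icc 0 1 = {z | z.re = 0 ∧ -1 ≤ z.im ∧ z.im ≤ 0} := by
    refine himage (fun z => z.im + 1) (fun t ht => ?_) fun z hz => ?_
    · exact ⟨rfl, neg_le_sub_iff_le_add.2 (by linarith [ht.1]), sub_nonpos.2 ht.2⟩
    · exact ⟨⟨by linarith [hz.2.1], by linarith [hz.2.2]⟩,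
        Complex.ext hz.1.symm (add_sub_cancel_right _ _)⟩
  rw [sides, ← h1, ← h2, ← h3]
  ext z
  simp only [mem_iUnion, mem_union, Fin.exists_fin_succ, IsEmpty.exists_iff, or_false, or_assoc]
  rfl

theorem eq_of_loopPiece_eq_loopPiece {k l : Fin 4} {s t : ℝ} (hs : s ∈ Ico (0 : ℝ) 1)
    (ht : t ∈ Ico (0 : ℝ) 1) (h : P.loopPiece k s = P.loopPiece l t) : k = l ∧ s = t := by
  have hs0 := (P.curve_mem_triangle (Ico_subset_Icc_self hs)).1
  have ht0 := (P.curve_mem_triangle (Ico_subset_Icc_self ht)).1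
  have hs1 := P.curve_re_lt_one hs
  have ht1 := P.curve_re_lt_one ht
  obtain ⟨hs, hs'⟩ := hs
  have hcurve : P.curve s = P.curve t → s = t := fun h' => P.injOn_curve ⟨hs, hs'⟩ ht h'
  obtain ⟨-, ht⟩ := ht
  have hre := congrArg Complex.re h
  have him := congrArg Complex.im h
  fin_cases k <;> fin_cases l <;>
    simp only [loopPiece, Fin.zero_eta, Fin.mk_one, Fin.reduceFinMk, Matrix.cons_val] at h hre him
  all_goals first
    | exact ⟨rfl, hcurve h⟩
    | exact ⟨rfl, by linarith⟩
    | exfalso; linarith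

theorem exists_circle_embedding_range_eq_frontier :
    ∃ f : Circle → ℂ, Continuous f ∧ Function.Injective f ∧ range f = frontier P.domain := by
  obtain ⟨Γ, hΓ, hconc⟩ := exists_continuous_isConcatenation P.continuous_loopPiece fun k => by
    fin_cases k <;> simp [loopPiece, P.curve_one, Complex.ext_iff]
  have hinj : InjOn Γ (Ico 0 1) :=
    hconc.injOn_Ico (by norm_num) fun k l s hs t ht h =>
      (P.eq_of_loopPiece_eq_loopPiece hs ht h).imp_right .inl
  have hloop : Γ 0 = Γ 1 := by
    rw [hconc.apply_zero, hconc.apply_one]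
    exact P.curve_zero.trans (Complex.ext rfl (sub_self 1).symm)
  rw [P.frontier_domain, ← P.iUnion_loopPiece_image, ← hconc.image_Icc]
  exact exists_circle_embedding hΓ.continuousOn hloop hinj

theorem ofReal_le_dimH_arc {s : ℝ} (hs : 0 < s) (h : 1 / 4 ≤ P.r ^ s) :
    ENNReal.ofReal s ≤ dimH P.arc := by
  refine ofReal_le_dimH_of_strong_separation (by norm_num : 1 < 4) P.isCompact_arc
    ⟨0, P.zero_mem_arc⟩ (fun j => (P.sim j).continuous) P.mapsTo_sim_arc P.r_pos hs
    (fun j z _ w _ => (P.dist_sim j z w).ge) (fun j k hjk => Set.disjoint_left.2 ?_)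
    (by exact_mod_cast h)
  rintro _ ⟨z, hz, rfl⟩ ⟨w, hw, heq⟩
  exact hjk (P.eq_of_sim_eq_sim (P.arc_subset_triangle hz) (P.arc_subset_triangle hw) heq.symm)

end HatParams

/-! ### Transfer to the plane and choice of the parameters -/

section Plane

theorem exists_continuous_bijective_sphere_circle (e : ℂ ≃ₗᵢ[ℝ] Plane) :
    ∃ h : sphere (0 : Plane) 1 → Circle, Continuous h ∧ Function.Bijective h := by
  have hmem (x : sphere (0 : Plane) 1) : e.symm x ∈ Submonoid.unitSphere ℂ := by
    exact mem_sphere_zero_iff_norm.2 ((e.symm.norm_map _).trans (norm_eq_of_mem_sphere x))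
  refine ⟨fun x => ⟨e.symm x, hmem x⟩,
    (e.symm.continuous.comp continuous_subtype_val).subtype_mk hmem, fun x y hxy => ?_, fun z => ?_⟩
  · exact Subtype.ext (e.symm.injective (congrArg Subtype.val hxy))
  · exact ⟨⟨e z, by simp [Circle.norm_coe]⟩, Circle.ext (e.symm_apply_apply z)⟩

theorem isJordanDomain_image (e : ℂ ≃ₗᵢ[ℝ] Plane) {O : Set ℂ} (hO : IsOpen O)
    (hconn : IsConnected O) (hbdd : Bornology.IsBounded O)
    (hf : ∃ f : Circle → ℂ, Continuous f ∧ Function.Injective f ∧ range f = frontier O) :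
    IsJordanDomain (e '' O) := by
  obtain ⟨f, hfc, hfi, hfr⟩ := hf
  obtain ⟨h, hhc, hhb⟩ := exists_continuous_bijective_sphere_circle e
  refine ⟨e.toHomeomorph.isOpenMap O hO, hconn.image e e.continuous.continuousOn,
    e.lipschitz.isBounded_image hbdd, e ∘ f ∘ h, e.continuous.comp (hfc.comp hhc),
    e.injective.comp (hfi.comp hhb.1), ?_⟩
  rw [range_comp, hhb.2.range_comp, hfr]
  exact e.toHomeomorph.image_frontier O

theorem isJohnDomain_image (e : ℂ ≃ₗᵢ[ℝ] Plane) {O : Set ℂ} {J : ℝ} {c : ℂ} (hO : IsOpen O)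
    (hne : (frontier O).Nonempty) (hc : c ∈ O) (h : ∀ z ∈ O, ∃ τ, CarrotJoined O J z c τ) :
    IsJohnDomain (e '' O) J := by
  refine isJohnDomain_of_forall_carrotJoined (e.toHomeomorph.isOpenMap O hO) ?_
    (mem_image_of_mem e hc) (forall_mem_image.2 fun z hz => ?_)
  · exact e.toHomeomorph.image_frontier O ▸ hne.image e
  · obtain ⟨τ, hτ⟩ := h z hz
    exact ⟨1 * τ, hτ.image_of_dist_eq_mul one_pos (fun x y => by simp) e.surjective⟩

theorem isJordanDomain_unitBall : IsJordanDomain (ball 0 1) :=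
  ⟨isOpen_ball, (convex_ball 0 1).isConnected ⟨0, by simp⟩, isBounded_ball, Subtype.val,
    continuous_subtype_val, Subtype.val_injective, by
      rw [Subtype.range_coe, frontier_ball 0 one_ne_zero]⟩

theorem isJohnDomain_unitBall {J : ℝ} (hJ0 : 0 ≤ J) (hJ : J ≤ 1) : IsJohnDomain (ball 0 1) J := by
  refine isJohnDomain_of_forall_carrotJoined isOpen_ball ?_ (mem_ball_self one_pos) fun x hx =>
    ⟨_, .of_convex hJ0 (convex_ball 0 1) hx (mem_ball_self one_pos) (ball_subset_ball ?_)⟩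
  · rw [frontier_ball 0 one_ne_zero]
    exact NormedSpace.sphere_nonempty.2 zero_le_one
  · exact mul_le_one₀ hJ dist_nonneg (mem_ball.1 hx).le

theorem one_le_dimH_frontier_unitBall : 1 ≤ dimH (frontier (ball (0 : Plane) 1)) := by
  rw [frontier_ball 0 one_ne_zero]
  refine one_le_dimH_of_isPreconnected (isPreconnected_sphere ?_ 0 1) ?_
  · rw [← Module.finrank_eq_rank, finrank_euclideanSpace_fin]
    norm_num
  · obtain ⟨x, hx⟩ := NormedSpace.sphere_nonempty (x := (0 : Plane)).2 zero_le_one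
    exact ⟨x, hx, -x, by simpa using hx,
      fun h => ne_neg_of_mem_unit_sphere ℝ ⟨x, hx⟩ (Subtype.ext h)⟩

end Plane

section Parameters

open Real

theorem quarter_le_rpow {α J : ℝ} (hα : 0 < α) (hJ0 : 0 ≤ J) (hJ : J ≤ (1 - α) * log 2) :
    1 / 4 ≤ (α / (2 * (α + J))) ^ (2 * α) := by
  have hq : 0 < α / (α + J) := by positivity
  have hlog : α * -log (α / (α + J)) ≤ J := by
    have h := one_sub_inv_le_log_of_pos hq
    rw [inv_div, add_div, div_self hα.ne'] at h
    calc α * -log (α / (α + J)) ≤ α * (J / α) := by gcongr; linarith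
      _ = J := mul_div_cancel₀ J hα.ne'
  rw [show α / (2 * (α + J)) = α / (α + J) / 2 by rw [div_div, mul_comm 2],
    le_rpow_iff_log_le (by norm_num) (by positivity), log_div hq.ne' two_ne_zero,
    show (1 / 4 : ℝ) = (2 ^ 2)⁻¹ by norm_num, log_inv, log_pow]
  push_cast
  linarith

/-- The gaps are chosen so that `b + 4 * ε = J / (α + J) = 1 - 2 * r`, and then the width `b` of the
shaft is the smallest one for which the John condition holds with slope `J`. -/
theorem exists_hatParams {α J : ℝ} (hα : 0 < α) (hJ : 0 < J) (h : (α + J) ^ 2 + J ^ 2 < 1) :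
    ∃ P : HatParams, P.r = α / (2 * (α + J)) ∧ J * P.radius ≤ P.b / 2 := by
  set a := J / (α + J) with ha
  set b := J * √(1 + a ^ 2) with hb
  have hsqrt : √(1 + a ^ 2) < 1 / (α + J) := by
    rw [Real.sqrt_lt' (by positivity), ha, div_pow, div_pow, one_pow, one_add_div (by positivity)]
    gcongr
  have hba : b < a := (mul_lt_mul_of_pos_left hsqrt hJ).trans_eq (mul_one_div J (α + J))
  have hr : 2 * (α / (2 * (α + J))) = 1 - a := by
    rw [ha]
    field_simp
    ring
  have hradius : J * √((1 / 2) ^ 2 + ((b + 4 * ((a - b) / 4)) / 2) ^ 2) = b / 2 := by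
    rw [show (1 / 2) ^ 2 + ((b + 4 * ((a - b) / 4)) / 2) ^ 2 = (1 + a ^ 2) / 2 ^ 2 by ring,
      Real.sqrt_div' _ (by positivity), Real.sqrt_sq two_pos.le, hb, mul_div_assoc]
  exact ⟨{ r := α / (2 * (α + J)), ε := (a - b) / 4, b := b
           r_pos := by positivity
           ε_pos := by linarith
           b_pos := by positivity
           add_eq_one := by rw [hr]; ring }, rfl, hradius.le⟩

theorem add_sq_add_sq_lt_one {J : ℝ} (hJ0 : 0 < J) (hJ : J < log 2 / 2) :
    (1 - J / log 2 + J) ^ 2 + J ^ 2 < 1 := by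
  have hlo := log_two_gt_d9
  have hhi := log_two_lt_d9
  obtain ⟨x, rfl⟩ : ∃ x, J = x * log 2 := ⟨J / log 2, by field_simp⟩
  have hx : 0 < x := by nlinarith
  have hx2 : x < 1 / 2 := by nlinarith
  rw [mul_div_cancel_right₀ _ (by linarith)]
  have h : x * ((1 - log 2) ^ 2 + log 2 ^ 2) < 2 * (1 - log 2) := by nlinarith
  calc (1 - x + x * log 2) ^ 2 + (x * log 2) ^ 2
      = 1 - x * (2 * (1 - log 2) - x * ((1 - log 2) ^ 2 + log 2 ^ 2)) := by ring
    _ < 1 := sub_lt_self 1 (mul_pos hx (sub_pos.2 h))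

end Parameters

theorem exists_john_jordan_domain_of_lt_log_two_div_two {J : ℝ} (hJ0 : 0 < J)
    (hJ : J < Real.log 2 / 2) :
    ∃ Ω : Set Plane, IsJordanDomain Ω ∧ IsJohnDomain Ω J ∧
      ENNReal.ofReal (2 - 2 / Real.log 2 * J) ≤ dimH (frontier Ω) := by
  have hL := Real.log_pos one_lt_two
  have hα : 0 < 1 - J / Real.log 2 := by rw [sub_pos, div_lt_one hL]; linarith
  obtain ⟨P, hr, hb⟩ := exists_hatParams hα hJ0 (add_sq_add_sq_lt_one hJ0 hJ)
  have hJohn (z) (hz : z ∈ P.domain) :=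
    P.exists_carrotJoined_center hJ0.le (by linarith [Real.log_two_lt_d9]) hb hz
  have hcenter : HatParams.center ∈ P.domain := .inr HatParams.center_mem_square
  have harc : P.arc ⊆ frontier P.domain := P.frontier_domain ▸ subset_union_left
  let e : ℂ ≃ₗᵢ[ℝ] Plane := Complex.orthonormalBasisOneI.repr
  refine ⟨e '' P.domain, ?_, ?_, ?_⟩
  · exact isJordanDomain_image e P.isOpen_domain
      (isConnected_of_forall_carrotJoined hcenter hJohn) P.isBounded_domain
      P.exists_circle_embedding_range_eq_frontier
  · exact isJohnDomain_image e P.isOpen_domain ⟨0, harc P.zero_mem_arc⟩ hcenter hJohn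
  · have hfrontier : frontier (e '' P.domain) = e '' frontier P.domain :=
      (e.toHomeomorph.image_frontier _).symm
    rw [hfrontier, e.isometry.dimH_image,
      show 2 - 2 / Real.log 2 * J = 2 * (1 - J / Real.log 2) by ring]
    refine (P.ofReal_le_dimH_arc (by positivity) ?_).trans (dimH_mono harc)
    exact hr ▸ quarter_le_rpow hα hJ0.le (by field_simp; linarith)

theorem exists_john_jordan_domain_of_log_two_div_two_le {J : ℝ} (hJ : Real.log 2 / 2 ≤ J)
    (hJ1 : J ≤ 1) :
    ∃ Ω : Set Plane, IsJordanDomain Ω ∧ IsJohnDomain Ω J ∧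
      ENNReal.ofReal (2 - 2 / Real.log 2 * J) ≤ dimH (frontier Ω) := by
  have hL := Real.log_pos one_lt_two
  have hle : 1 ≤ 2 / Real.log 2 * J := by
    rw [div_mul_eq_mul_div, le_div_iff₀ hL]
    linarith
  exact ⟨ball 0 1, isJordanDomain_unitBall, isJohnDomain_unitBall (by linarith) hJ1,
    (ENNReal.ofReal_le_one.2 (by linarith)).trans one_le_dimH_frontier_unitBall⟩

theorem exists_john_jordan_domain_large_dimH_general (J : ℝ) (hJ0 : 0 < J) (hJ : J ≤ 1) :
    ∃ Ω : Set Plane, IsJordanDomain Ω ∧ IsJohnDomain Ω J ∧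
      ENNReal.ofReal (2 - 2 / Real.log 2 * J) ≤ dimH (frontier Ω) :=
  (lt_or_ge J (Real.log 2 / 2)).elim (exists_john_jordan_domain_of_lt_log_two_div_two hJ0)
    (exists_john_jordan_domain_of_log_two_div_two_le · hJ)

/-- **Sharpness of the dimension bound for John domains.** For every `J ∈ (0,1/2)`
there is a Jordan `J`-John domain `Ω ⊆ ℝ²` with `dim_H(∂Ω) ≥ 2 - (2/log 2)·J`. -/
theorem exists_john_jordan_domain_large_dimH (J : ℝ) (hJ0 : 0 < J) (hJ : J < 1/2) :
    ∃ Ω : Set Plane, IsJordanDomain Ω ∧ IsJohnDomain Ω J ∧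
      ENNReal.ofReal (2 - 2 / Real.log 2 * J) ≤ dimH (frontier Ω) :=
  exists_john_jordan_domain_large_dimH_general J hJ0 (by linarith)
end
end

section
/- For every ε ∈ (0,1/2), the cone domain Ω_ε fails to be a J-John domain for every J > ε. -/
/-!
Let `h` be a height in `[0, 1)` at least that of the John center. A John curve from a point `x`
near the apex `(0, 1)` has to cross height `h` at some point `γ t`, and `t` is at least the
height lost, which tends to `1 - h` as `x` tends to the apex. But the horizontal slice of the cone
at height `h` has half-width `(1 - h) * ε`, so `J * t ≤ dist (γ t, ∂Ω) ≤ (1 - h) * ε`, and in the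
limit `J ≤ ε`.
-/

open Metric Set MeasureTheory

noncomputable section

/-- The cone domain `Ω_ε`: a square with a cone of width parameter `ε` attached on top. -/
def coneDomain (ε : ℝ) : Set Plane :=
  {x | |x 0| < 1 ∧ |x 1 + 1| < 1} ∪ {x | |x 0| < (1 - x 1) * ε ∧ 0 ≤ x 1}

theorem inter_frontier_nonempty_of_isPreconnected {X : Type*} [TopologicalSpace X] {s t : Set X}
    (ht : IsPreconnected t) (hts : (t ∩ s).Nonempty) (hts' : (t ∩ sᶜ).Nonempty) :
    (t ∩ frontier s).Nonempty := by
  rw [← not_disjoint_iff_nonempty_inter, ← subset_compl_iff_disjoint_right,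
    compl_frontier_eq_union_interior]
  intro hcover
  obtain ⟨p, hpt, hps⟩ := hts
  obtain ⟨q, hqt, hqs⟩ := hts'
  have hp : p ∈ interior s := (hcover hpt).resolve_right fun h ↦ interior_subset h hps
  have hq : q ∈ interior sᶜ := (hcover hqt).resolve_left fun h ↦ hqs (interior_subset h)
  obtain ⟨y, -, hys, hys'⟩ :=
    ht _ _ isOpen_interior isOpen_interior hcover ⟨p, hpt, hp⟩ ⟨q, hqt, hq⟩
  exact interior_subset hys' (interior_subset hys)

theorem infDist_frontier_le_dist {E : Type*} [SeminormedAddCommGroup E] [NormedSpace ℝ E]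
    {s : Set E} {p q : E} (hp : p ∈ s) (hq : q ∉ s) : infDist p (frontier s) ≤ dist p q := by
  obtain ⟨y, hy, hys⟩ : (segment ℝ p q ∩ frontier s).Nonempty :=
    inter_frontier_nonempty_of_isPreconnected (convex_segment p q).isPreconnected
      ⟨p, left_mem_segment ℝ p q, hp⟩ ⟨q, right_mem_segment ℝ p q, hq⟩
  calc infDist p (frontier s) ≤ dist p y := infDist_le_dist_of_mem hys
    _ ≤ dist p y + dist y q := le_add_of_nonneg_right dist_nonneg
    _ = dist p q := dist_add_dist_of_mem_segment hy

namespace IsJohnDomain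

variable {Ω : Set Plane} {J : ℝ}

theorem exists_forall_level_le_infDist_frontier (hΩ : IsJohnDomain Ω J) (hJ : 0 ≤ J) :
    ∃ x₀ ∈ Ω, ∀ f : Plane → ℝ, LipschitzWith 1 f → ∀ x ∈ Ω, ∀ h ∈ Icc (f x₀) (f x),
      ∃ z ∈ Ω, f z = h ∧ J * (f x - h) ≤ infDist z (frontier Ω) := by
  obtain ⟨x₀, hx₀, hcurve⟩ := hΩ
  refine ⟨x₀, hx₀, fun f hf x hx h hh ↦ ?_⟩
  obtain ⟨ℓ, γ, hℓ, hγ, rfl, rfl, hdist⟩ := hcurve x hx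
  have hfγ : LipschitzOnWith 1 (f ∘ γ) (Icc 0 ℓ) := by
    simpa only [mul_one] using hf.comp_lipschitzOnWith hγ
  obtain ⟨t, ht, rfl⟩ := intermediate_value_Icc' hℓ hfγ.continuousOn hh
  have hdrop : f (γ 0) - f (γ t) ≤ t := by
    have hdist_le := hfγ.dist_le_mul 0 (left_mem_Icc.2 hℓ) t ht
    simp only [Function.comp_apply, Real.dist_eq, NNReal.coe_one, one_mul, zero_sub, abs_neg,
      abs_of_nonneg ht.1] at hdist_le
    exact (le_abs_self _).trans hdist_le
  exact ⟨γ t, (hdist t ht).1, rfl, (mul_le_mul_of_nonneg_left hdrop hJ).trans (hdist t ht).2⟩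

theorem le_of_infDist_frontier_le (hΩ : IsJohnDomain Ω J) (hJ : 0 ≤ J) {f : Plane → ℝ}
    (hf : LipschitzWith 1 f) {a b K : ℝ} (hab : a < b) (hlt : ∀ x ∈ Ω, f x < b)
    (hb : b ∈ closure (f '' Ω))
    (hK : ∀ z ∈ Ω, a ≤ f z → infDist z (frontier Ω) ≤ K * (b - f z)) : J ≤ K := by
  obtain ⟨x₀, hx₀, hlevel⟩ := hΩ.exists_forall_level_le_infDist_frontier hJ
  obtain ⟨h, hx₀h, hah, hhb⟩ : ∃ h, f x₀ ≤ h ∧ a ≤ h ∧ h < b :=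
    ⟨max (f x₀) a, le_max_left _ _, le_max_right _ _, max_lt (hlt x₀ hx₀) hab⟩
  have hbound : ∀ y ∈ f '' Ω, h ≤ y → J * (y - h) ≤ K * (b - h) := by
    rintro _ ⟨x, hx, rfl⟩ hhx
    obtain ⟨z, hz, rfl, hJz⟩ := hlevel f hf x hx h ⟨hx₀h, hhx⟩
    exact hJz.trans (hK z hz hah)
  obtain ⟨u, huΩ, hub⟩ := mem_closure_iff_seq_limit.1 hb
  have hlim : J * (b - h) ≤ K * (b - h) :=
    le_of_tendsto ((hub.sub_const h).const_mul J) <|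
      (hub.eventually (lt_mem_nhds hhb)).mono fun n hn ↦ hbound _ (huΩ n) hn.le
  exact le_of_mul_le_mul_right hlim (sub_pos.2 hhb)

end IsJohnDomain

section ConeDomain

variable {ε : ℝ} {p : Plane}

theorem mem_coneDomain_iff_of_nonneg (hp : 0 ≤ p 1) :
    p ∈ coneDomain ε ↔ |p 0| < (1 - p 1) * ε := by
  have hsquare : ¬ |p 1 + 1| < 1 := by
    rw [abs_of_nonneg (by linarith)]
    linarith
  simp [coneDomain, hp, hsquare]

theorem apply_one_lt_one_of_mem_coneDomain (hε : 0 < ε) (hp : p ∈ coneDomain ε) : p 1 < 1 := by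
  rcases lt_or_ge (p 1) 0 with hneg | hnonneg
  · exact hneg.trans one_pos
  · have hwidth := (abs_nonneg _).trans_lt ((mem_coneDomain_iff_of_nonneg hnonneg).1 hp)
    exact sub_pos.1 (pos_of_mul_pos_left hwidth hε.le)

theorem one_mem_closure_image_apply_one_coneDomain (hε : 0 < ε) :
    1 ∈ closure ((fun p : Plane ↦ p 1) '' coneDomain ε) := by
  have haxis : Ico 0 1 ⊆ (fun p : Plane ↦ p 1) '' coneDomain ε := by
    intro y hy
    refine ⟨!₂[0, y], (mem_coneDomain_iff_of_nonneg hy.1).2 ?_, rfl⟩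
    simpa using mul_pos (sub_pos.2 hy.2) hε
  refine closure_mono haxis ?_
  rw [closure_Ico zero_ne_one]
  exact right_mem_Icc.2 zero_le_one

theorem infDist_frontier_coneDomain_le (hp : p ∈ coneDomain ε) (hp₁ : 0 ≤ p 1) :
    infDist p (frontier (coneDomain ε)) ≤ ε * (1 - p 1) := by
  rw [mul_comm]
  set c := (1 - p 1) * ε
  have hpc : |p 0| < c := (mem_coneDomain_iff_of_nonneg hp₁).1 hp
  obtain ⟨s, hs, hps⟩ : ∃ s, |s| = c ∧ |p 0 - s| ≤ c := by
    have hc₀ : 0 < c := (abs_nonneg _).trans_lt hpc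
    obtain ⟨hleft, hright⟩ := abs_lt.1 hpc
    rcases le_total 0 (p 0) with hp₀ | hp₀
    · exact ⟨c, abs_of_pos hc₀, abs_le.2 ⟨by linarith, by linarith⟩⟩
    · exact ⟨-c, by rw [abs_neg, abs_of_pos hc₀], abs_le.2 ⟨by linarith, by linarith⟩⟩
  have hq : (!₂[s, p 1] : Plane) ∉ coneDomain ε := fun h ↦
    ((mem_coneDomain_iff_of_nonneg (p := !₂[s, p 1]) hp₁).1 h).ne hs
  calc infDist p (frontier (coneDomain ε)) ≤ dist p !₂[s, p 1] := infDist_frontier_le_dist hp hq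
    _ = |p 0 - s| := by simp [EuclideanSpace.dist_eq, Real.dist_eq, Real.sqrt_sq_eq_abs]
    _ ≤ c := hps

end ConeDomain

theorem coneDomain_not_johnDomain_general {ε J : ℝ} (hε : 0 < ε) (hJ : ε < J) :
    ¬ IsJohnDomain (coneDomain ε) J := by
  intro hJohn
  have hheight : LipschitzWith 1 (fun p : Plane ↦ p 1) :=
    LipschitzWith.mk_one fun p q ↦ PiLp.dist_apply_le p q 1
  have hle : J ≤ ε :=
    hJohn.le_of_infDist_frontier_le (hε.trans hJ).le hheight zero_lt_one
      (fun _ ↦ apply_one_lt_one_of_mem_coneDomain hε)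
      (one_mem_closure_image_apply_one_coneDomain hε) (fun _ ↦ infDist_frontier_coneDomain_le)
  exact hJ.not_ge hle

/-- **Failure of the John condition for the cone domain.** For every `ε ∈ (0,1/2)` the
cone domain `Ω_ε` fails to be a `J`-John domain for every `J > ε`. -/
theorem coneDomain_not_johnDomain (ε : ℝ) (hε0 : 0 < ε) (hε : ε < 1/2)
    (J : ℝ) (hJ : ε < J) : ¬ IsJohnDomain (coneDomain ε) J :=
  coneDomain_not_johnDomain_general hε0 hJ
end
end
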